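/- arXiv:1602.06817 — 2 statements merged into one kernel-verified Lean document; each statement's English description precedes it below -/
import Mathlib

section
/- Let G be a prime (P6, bull)-free graph containing an induced G7 (an induced 5-cycle C on c1,...,c5 with edges c_i c_{i+1} mod 5, plus d adjacent exactly to c1, c4, x, and x adjacent only to d). Let F be the set of vertices outside C with exactly four neighbors on C. Then the induced subgraph G \ F is triangle-free. -/
open SimpleGraph

variable {V : Type*}

/-- The vertices `a b c d e` induce a bull in `G` (edges ab, bc, cd, be, ce). -/
def IsBull (G : SimpleGraph V) (a b c d e : V) : Prop :=
  a ≠ b ∧ a ≠ c ∧ a ≠ d ∧ a ≠ e ∧ b ≠ c ∧ b ≠ d ∧ b ≠ e ∧ c ≠ d ∧ c ≠ e ∧ d ≠ e ∧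
  G.Adj a b ∧ G.Adj b c ∧ G.Adj c d ∧ G.Adj b e ∧ G.Adj c e ∧
  ¬ G.Adj a c ∧ ¬ G.Adj a d ∧ ¬ G.Adj a e ∧ ¬ G.Adj b d ∧ ¬ G.Adj d e

/-- `G` contains no induced bull. -/
def BullFree (G : SimpleGraph V) : Prop := ∀ a b c d e : V, ¬ IsBull G a b c d e

/-- `G` contains no induced path on six vertices. -/
def P6Free (G : SimpleGraph V) : Prop :=
  ¬ ∃ p : Fin 6 → V, Function.Injective p ∧
      ∀ i j : Fin 6, G.Adj (p i) (p j) ↔ (i.val + 1 = j.val ∨ j.val + 1 = i.val)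

/-- `c` lists the vertices of an induced 5-cycle in `G` (indices mod 5). -/
def IsInducedC5 (G : SimpleGraph V) (c : Fin 5 → V) : Prop :=
  Function.Injective c ∧ ∀ i j : Fin 5, G.Adj (c i) (c j) ↔ (j = i + 1 ∨ i = j + 1)

/-- `S` is a homogeneous set in `G`. -/
def IsHomogeneous (G : SimpleGraph V) (S : Set V) : Prop :=
  ∀ v ∉ S, (∀ s ∈ S, G.Adj v s) ∨ (∀ s ∈ S, ¬ G.Adj v s)

/-- `S` is a proper homogeneous set: homogeneous, of size at least two, not all of `V`. -/
def IsProperHomogeneous (G : SimpleGraph V) (S : Set V) : Prop :=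
  IsHomogeneous G S ∧ (∃ a ∈ S, ∃ b ∈ S, a ≠ b) ∧ S ≠ Set.univ

/-- A graph is prime if it has no proper homogeneous set. -/
def IsPrimeGraph (G : SimpleGraph V) : Prop := ¬ ∃ S : Set V, IsProperHomogeneous G S

/-- Number of neighbors of `x` on the 5-cycle `c`. -/
def nbrCount (G : SimpleGraph V) [DecidableRel G.Adj] (c : Fin 5 → V) (x : V) : ℕ :=
  (Finset.univ.filter fun i : Fin 5 => G.Adj x (c i)).card

/-! ### Vertex types over the seven-vertex graph and a small checker for forbidden patterns -/

/-- Neighbourhood masks of the vertices `c0,...,c4,d,x` of the seven-vertex graph. -/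
def bRow (i : ℕ) : ℕ := [50, 5, 10, 52, 9, 73, 32].getD i 0

/-- Adjacency of three extra vertices 7, 8, 9 (of types `t7 t8 t9`) and the base graph, `j < i`. -/
def lowAdj (t7 t8 t9 : ℕ) (p q r : Bool) (i j : ℕ) : Bool :=
  if i < 7 then (bRow i).testBit j
  else if i = 7 then t7.testBit j
  else if i = 8 then (if j < 7 then t8.testBit j else p)
  else (if j < 7 then t9.testBit j else if j = 7 then q else if j = 8 then r else false)

def cAdj (t7 t8 t9 : ℕ) (p q r : Bool) (i j : ℕ) : Bool :=
  if j < i then lowAdj t7 t8 t9 p q r i j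
  else if i < j then lowAdj t7 t8 t9 p q r j i else false

/-- Does the list of positions induce a bull, or a six-vertex path? -/
def hit (A : ℕ → ℕ → Bool) : List ℕ → Bool
  | [a, b, c, d, e] => A a b && A b c && A c d && A b e && A c e &&
      !A a c && !A a d && !A a e && !A b d && !A d e
  | [a, b, c, d, e, f] => A a b && A b c && A c d && A d e && A e f &&
      !A a c && !A a d && !A a e && !A a f && !A b d && !A b e && !A b f &&
      !A c e && !A c f && !A d f
  | _ => false

def refuted (L : List (List ℕ)) (t7 t8 t9 : ℕ) (p q r : Bool) : Bool :=
  L.any (hit (cAdj t7 t8 t9 p q r))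

theorem no_bull {G : SimpleGraph V} (hB : BullFree G) (a b c d e : V)
    (h1 : G.Adj a b) (h2 : G.Adj b c) (h3 : G.Adj c d) (h4 : G.Adj b e) (h5 : G.Adj c e)
    (n1 : ¬ G.Adj a c) (n2 : ¬ G.Adj a d) (n3 : ¬ G.Adj a e) (n4 : ¬ G.Adj b d)
    (n5 : ¬ G.Adj d e) : False := by
  apply hB a b c d e
  refine ⟨h1.ne, ?_, ?_, ?_, h2.ne, ?_, h4.ne, h3.ne, h5.ne, ?_, h1, h2, h3, h4, h5, n1, n2, n3,
    n4, n5⟩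
  · rintro rfl; exact n2 h3
  · rintro rfl; exact n4 h1.symm
  · rintro rfl; exact n1 h5.symm
  · rintro rfl; exact n2 h1
  · rintro rfl; exact n4 h4

theorem no_P6 {G : SimpleGraph V} (hP : P6Free G) (a b c d e f : V)
    (h1 : G.Adj a b) (h2 : G.Adj b c) (h3 : G.Adj c d) (h4 : G.Adj d e) (h5 : G.Adj e f)
    (n1 : ¬ G.Adj a c) (n2 : ¬ G.Adj a d) (n3 : ¬ G.Adj a e) (n4 : ¬ G.Adj a f)
    (n5 : ¬ G.Adj b d) (n6 : ¬ G.Adj b e) (n7 : ¬ G.Adj b f) (n8 : ¬ G.Adj c e)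
    (n9 : ¬ G.Adj c f) (n10 : ¬ G.Adj d f) : False := by
  apply hP
  have key : ∀ i j : Fin 6, G.Adj (![a, b, c, d, e, f] i) (![a, b, c, d, e, f] j) ↔
      (i.val + 1 = j.val ∨ j.val + 1 = i.val) := by
    intro i j
    fin_cases i <;> fin_cases j <;>
      simp [h1, h2, h3, h4, h5, n1, n2, n3, n4, n5, n6, n7, n8, n9, n10, h1.symm, h2.symm,
        h3.symm, h4.symm, h5.symm, mt G.adj_symm n1, mt G.adj_symm n2,
        mt G.adj_symm n3, mt G.adj_symm n4, mt G.adj_symm n5,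
        mt G.adj_symm n6, mt G.adj_symm n7, mt G.adj_symm n8,
        mt G.adj_symm n9, mt G.adj_symm n10]
  refine ⟨![a, b, c, d, e, f], ?_, key⟩
  intro i j hij
  have h6 : ∀ k : Fin 6, (i.val + 1 = k.val ∨ k.val + 1 = i.val) ↔
      (j.val + 1 = k.val ∨ k.val + 1 = j.val) := by
    intro k
    rw [← key, ← key, hij]
  clear key hij
  revert i j
  decide

/-- `h 0, ..., h 6` induce the seven-vertex graph. -/
def IsG7 (G : SimpleGraph V) (h : ℕ → V) : Prop :=
  ∀ i < 7, ∀ j < 7, (G.Adj (h i) (h j) ↔ (bRow i).testBit j = true)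

open Classical in
/-- Type of a vertex: its neighbourhood mask on the seven-vertex graph. -/
noncomputable def ty (G : SimpleGraph V) (h : ℕ → V) (v : V) : ℕ :=
  Nat.ofBits (fun i : Fin 7 => decide (G.Adj v (h i)))

theorem ty_bit (G : SimpleGraph V) (h : ℕ → V) (v : V) {i : ℕ} (hi : i < 7) :
    (ty G h v).testBit i = true ↔ G.Adj v (h i) := by
  unfold ty
  rw [Nat.testBit_ofBits_lt _ _ hi]
  simp

theorem ty_lt (G : SimpleGraph V) (h : ℕ → V) (v : V) : ty G h v < 128 :=
  Nat.ofBits_lt_two_pow _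

theorem eq_of_bits {s t : ℕ} (hs : s < 128) (ht : t < 128)
    (h : ∀ i < 7, (s.testBit i = true ↔ t.testBit i = true)) : s = t := by
  apply Nat.eq_of_testBit_eq
  intro i
  by_cases hi : i < 7
  · exact Bool.eq_iff_iff.2 (h i hi)
  · have h2 : 128 ≤ 2 ^ i := by
      calc 128 = 2 ^ 7 := by norm_num
        _ ≤ 2 ^ i := Nat.pow_le_pow_right (by norm_num) (by omega)
    rw [Nat.testBit_lt_two_pow (by omega), Nat.testBit_lt_two_pow (by omega)]

def emb (h : ℕ → V) (a b e : V) (i : ℕ) : V :=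
  if i < 7 then h i else if i = 7 then a else if i = 8 then b else e

open Classical in
theorem cAdj_iff {G : SimpleGraph V} {h : ℕ → V} (g : IsG7 G h) (a b e : V) (i j : ℕ) :
    cAdj (ty G h a) (ty G h b) (ty G h e) (decide (G.Adj a b)) (decide (G.Adj a e))
      (decide (G.Adj b e)) i j = decide (G.Adj (emb h a b e i) (emb h a b e j)) := by
  have low : ∀ i j : ℕ, j < i →
      lowAdj (ty G h a) (ty G h b) (ty G h e) (decide (G.Adj a b)) (decide (G.Adj a e))
      (decide (G.Adj b e)) i j = decide (G.Adj (emb h a b e i) (emb h a b e j)) := by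
    intro i j hji
    rw [Bool.eq_iff_iff, decide_eq_true_iff]
    unfold lowAdj emb
    by_cases hj : j < 7
    · rw [if_pos hj, if_pos hj, if_pos hj]
      split_ifs with h1 h2 h3
      · exact (g i h1 j hj).symm
      · exact ty_bit G h a hj
      · exact ty_bit G h b hj
      · exact ty_bit G h e hj
    · rw [if_neg (show ¬ i < 7 by omega), if_neg (show ¬ i < 7 by omega),
        if_neg (show ¬ i = 7 by omega), if_neg (show ¬ i = 7 by omega)]
      simp only [if_neg hj]
      by_cases h7 : j = 7
      · simp only [if_pos h7]
        split_ifs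
        · simp [G.adj_comm]
        · simp [G.adj_comm]
      · rw [if_neg (show ¬ i = 8 by omega), if_neg (show ¬ i = 8 by omega)]
        simp only [if_neg h7]
        split_ifs
        · simp [G.adj_comm]
        · simp
  unfold cAdj
  split_ifs with h1 h2
  · exact low i j h1
  · rw [low j i h2]
    simp [G.adj_comm]
  · have : i = j := by omega
    subst this
    simp

open Classical in
theorem sound {G : SimpleGraph V} (hP : P6Free G) (hB : BullFree G) {h : ℕ → V} (g : IsG7 G h)
    (L : List (List ℕ)) (a b e : V) :
    ¬ refuted L (ty G h a) (ty G h b) (ty G h e) (decide (G.Adj a b)) (decide (G.Adj a e))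
      (decide (G.Adj b e)) = true := by
  intro hr
  unfold refuted at hr
  obtain ⟨l, -, hl⟩ := List.any_eq_true.1 hr
  unfold hit at hl
  split at hl
  · simp only [cAdj_iff g, Bool.and_eq_true, Bool.not_eq_true', decide_eq_true_iff,
      decide_eq_false_iff_not] at hl
    obtain ⟨⟨⟨⟨⟨⟨⟨⟨⟨h1, h2⟩, h3⟩, h4⟩, h5⟩, n1⟩, n2⟩, n3⟩, n4⟩, n5⟩ := hl
    exact no_bull hB _ _ _ _ _ h1 h2 h3 h4 h5 n1 n2 n3 n4 n5
  · simp only [cAdj_iff g, Bool.and_eq_true, Bool.not_eq_true', decide_eq_true_iff,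
      decide_eq_false_iff_not] at hl
    obtain ⟨⟨⟨⟨⟨⟨⟨⟨⟨⟨⟨⟨⟨⟨h1, h2⟩, h3⟩, h4⟩, h5⟩, n1⟩, n2⟩, n3⟩, n4⟩, n5⟩, n6⟩, n7⟩, n8⟩, n9⟩,
      n10⟩ := hl
    exact no_P6 hP _ _ _ _ _ _ h1 h2 h3 h4 h5 n1 n2 n3 n4 n5 n6 n7 n8 n9 n10
  · simp at hl

open Classical in
theorem sound' {G : SimpleGraph V} (hP : P6Free G) (hB : BullFree G) {h : ℕ → V} (g : IsG7 G h)
    (L : List (List ℕ)) {a b e : V} {s t k : ℕ} {p q r : Bool}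
    (ha : ty G h a = s) (hb : ty G h b = t) (he : ty G h e = k)
    (hp : G.Adj a b ↔ p = true) (hq : G.Adj a e ↔ q = true) (hr : G.Adj b e ↔ r = true) :
    refuted L s t k p q r ≠ true := by
  subst ha hb he
  have e1 : p = decide (G.Adj a b) := by rw [Bool.eq_iff_iff]; simp [hp]
  have e2 : q = decide (G.Adj a e) := by rw [Bool.eq_iff_iff]; simp [hq]
  have e3 : r = decide (G.Adj b e) := by rw [Bool.eq_iff_iff]; simp [hr]
  rw [e1, e2, e3]
  exact sound hP hB g L a b e

/-! ### The finite checks -/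

/-- All possible vertex types. -/
def allTypes : List ℕ :=
  [0, 1, 5, 7, 8, 9, 10, 14, 15, 16, 25, 32, 34, 36, 48, 50, 51, 52, 60, 69, 73, 74, 82, 84, 96,
    105, 127]

/-- The types that remain once `127`, `15` and the adjacent-twin types are excluded. -/
def remTypes : List ℕ := [0, 1, 5, 8, 9, 10, 16, 32, 34, 36, 48, 50, 52, 69, 73, 74, 82, 84]

/-- Type of an adjacent twin of vertex `p`. -/
def twinType (p : ℕ) : ℕ := [51, 7, 14, 60, 25, 105, 96].getD p 0

def list1 : List (List ℕ) :=
    [[0, 1, 2, 3, 7], [0, 4, 3, 2, 7], [1, 0, 4, 3, 7], [1, 2, 3, 4, 7], [1, 7, 3, 4, 5], [2, 1, 0,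
   5, 7], [1, 7, 5, 3, 6], [2, 7, 0, 5, 4], [1, 0, 5, 6, 7], [0, 4, 7, 6, 3], [1, 0, 7, 6, 4], [1,
   2, 3, 5, 6, 7], [1, 7, 5, 6, 3], [2, 7, 4, 0, 5, 6], [0, 1, 2, 3, 7, 6], [0, 4, 3, 2, 7, 6], [1,
   0, 5, 3, 7], [1, 7, 6, 5, 3, 4], [2, 7, 5, 6, 0], [4, 3, 7, 6, 2], [6, 5, 3, 2, 1, 7], [0, 5, 3,
   2, 7], [0, 5, 7, 2, 6], [1, 2, 3, 4, 7, 6], [2, 1, 0, 4, 7], [2, 1, 7, 6, 0], [6, 5, 0, 1, 2, 7]]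

def list2 : List (List ℕ) :=
    [[1, 7, 5, 8, 3], [6, 7, 0, 8, 4], [6, 7, 1, 8, 0], [1, 7, 3, 8, 4], [1, 7, 4, 8, 3], [2, 7, 6,
   8, 5], [1, 7, 3, 8, 5], [1, 7, 5, 8, 6], [1, 7, 6, 8, 5], [2, 7, 5, 8, 6]]

def list2b : List (List ℕ) :=
    [[1, 7, 9, 8, 5], [6, 7, 9, 8, 0], [0, 7, 9, 8, 3], [1, 7, 9, 8, 6], [2, 7, 9, 8, 4], [2, 7, 9,
   8, 5]]

def list3 : List (List ℕ) :=
    [[1, 0, 5, 8, 7], [6, 5, 0, 8, 7], [6, 5, 3, 8, 7], [1, 0, 4, 8, 7], [0, 1, 2, 8, 7], [3, 2, 1,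
   8, 7], [0, 5, 6, 8, 7], [2, 3, 4, 8, 7], [2, 3, 5, 8, 7], [4, 0, 1, 8, 7], [4, 3, 2, 8, 7], [1,
   0, 5, 7, 8], [1, 7, 4, 3, 8, 6], [0, 4, 3, 8, 7], [1, 2, 3, 8, 6, 7], [1, 2, 3, 8, 7], [1, 8, 3,
   7, 4], [1, 8, 3, 7, 5], [1, 8, 5, 7, 3], [1, 8, 5, 7, 6], [2, 8, 5, 7, 6], [2, 8, 6, 5, 7, 4],
   [3, 4, 0, 8, 6, 7], [4, 0, 1, 7, 8], [4, 3, 2, 7, 8], [6, 8, 0, 7, 4], [6, 8, 1, 7, 0]]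

def list4 : List (List ℕ) :=
    [[6, 5, 7, 9, 8], [1, 0, 7, 9, 8], [0, 1, 7, 9, 8], [3, 4, 7, 9, 8], [2, 3, 7, 9, 8], [5, 6, 7,
   9, 8], [3, 2, 7, 9, 8], [0, 5, 7, 9, 8], [6, 5, 3, 9, 7, 8], [0, 1, 2, 9, 7, 8], [3, 2, 1, 9, 7,
   8], [4, 3, 7, 9, 8], [1, 9, 3, 4, 7], [2, 1, 0, 9, 7, 8], [2, 1, 7, 9, 8], [4, 3, 2, 9, 7, 8],
   [1, 2, 7, 9, 8], [0, 5, 3, 9, 7, 8], [1, 0, 4, 9, 7, 8], [1, 0, 5, 9, 7, 8], [1, 0, 9, 6, 7], [4,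
   0, 7, 9, 8], [0, 1, 7, 6, 9], [0, 1, 9, 6, 7], [0, 9, 2, 3, 7], [0, 9, 3, 8, 2], [2, 1, 9, 4, 7]]

def list5 : List (List ℕ) :=
    [[4, 8, 9, 6, 7], [4, 9, 6, 5, 8], [0, 4, 9, 6, 8], [4, 9, 5, 6, 8], [0, 4, 9, 2, 8], [0, 7, 9,
   6, 8], [1, 0, 9, 6, 7], [2, 8, 9, 6, 7], [0, 7, 8, 3, 9], [1, 9, 6, 5, 8], [2, 1, 0, 5, 8, 7],
   [6, 5, 0, 1, 8, 7], [6, 5, 3, 2, 8, 7], [1, 0, 8, 3, 7], [4, 8, 9, 5, 7], [1, 8, 9, 6, 7], [2, 3,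
   4, 0, 8, 7], [1, 2, 8, 5, 9], [0, 1, 2, 3, 8, 7], [0, 8, 3, 2, 7], [1, 9, 4, 3, 8], [0, 1, 9, 6,
   8], [0, 4, 3, 2, 9, 8], [1, 0, 9, 3, 8], [0, 7, 3, 2, 8], [1, 2, 3, 5, 9, 8], [2, 1, 7, 8, 5, 6],
   [1, 9, 3, 4, 8], [0, 1, 7, 3, 8], [0, 8, 9, 2, 7], [1, 9, 5, 3, 8], [1, 9, 8, 3, 7], [0, 9, 3, 2,
   8], [1, 0, 9, 6, 8], [1, 2, 3, 4, 9, 7], [1, 2, 3, 5, 9, 7]]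

theorem check1 : (List.range 128).all (fun t => allTypes.contains t ||
    refuted list1 t t t false false false) = true := by decide +kernel

theorem check2 : allTypes.all (fun t => t == 0 || t == 127 ||
    refuted list2 127 t t false false false) = true := by decide +kernel

theorem check2b : allTypes.all (fun t => t == 0 || t == 127 ||
    refuted list2b 127 0 t false true true) = true := by decide +kernel

theorem check3 : (List.range 7).all (fun p => allTypes.all (fun t => !t.testBit p ||
    t == twinType p || refuted list3 (twinType p) t t false false false)) = true := by
  decide +kernel

theorem check4 : remTypes.all (fun s => (15 :: remTypes).all (fun t => s == t ||
    refuted list4 s s t true true false)) = true := by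
  decide +kernel

theorem check5 : remTypes.all (fun s => remTypes.all (fun t => !(Nat.blt s t) ||
    remTypes.all (fun k => !(Nat.blt t k) || refuted list5 s t k true true true))) = true := by
  decide +kernel

theorem check6 : allTypes.all (fun t => remTypes.contains t || t == 15 || t == 127 ||
    (List.range 7).any (fun p => t == twinType p)) = true := by decide +kernel

/-! ### Structural consequences -/

theorem ty_mem {G : SimpleGraph V} (hP : P6Free G) (hB : BullFree G) {h : ℕ → V} (g : IsG7 G h)
    (v : V) : ty G h v ∈ allTypes := by
  have h1 := List.all_eq_true.1 check1 (ty G h v) (List.mem_range.2 (ty_lt G h v))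
  rcases Bool.or_eq_true_iff.1 h1 with h2 | h2
  · exact List.contains_iff_mem.1 h2
  · exact absurd h2 (sound' hP hB g list1 rfl rfl rfl (by simp) (by simp) (by simp))

/-- Primality: a property which is inherited by every vertex that is mixed on an edge inside the
property holds either for all vertices or on a stable set. -/
theorem prime_edge {G : SimpleGraph V} (hPr : IsPrimeGraph G) (P : V → Prop) (w : V) (hw : ¬ P w)
    (hstep : ∀ u v z, P u → P v → G.Adj u v → G.Adj z u → ¬ G.Adj z v → P z)
    (u v : V) (hu : P u) (hv : P v) (huv : G.Adj u v) : False := by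
  apply hPr
  let S : Set V := {y | Relation.ReflTransGen (fun a b => G.Adj a b ∧ P b) u y}
  have hSP : ∀ y ∈ S, P y := by
    intro y hy
    rcases Relation.ReflTransGen.cases_tail hy with h1 | ⟨_, _, h2⟩
    · rw [h1]; exact hu
    · exact h2.2
  refine ⟨S, ?_, ⟨u, Relation.ReflTransGen.refl, v, ?_, huv.ne⟩, ?_⟩
  · intro z hz
    have hno : ∀ y ∈ S, G.Adj z y → ¬ P z := by
      intro y hy hzy hPz
      exact hz (Relation.ReflTransGen.tail hy ⟨hzy.symm, hPz⟩)
    have hall : ∀ y ∈ S, (G.Adj z y ↔ G.Adj z u) := by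
      intro y hy
      induction hy with
      | refl => rfl
      | @tail b c hb hbc ih =>
        have hc : c ∈ S := Relation.ReflTransGen.tail hb hbc
        rw [← ih]
        constructor
        · intro h1
          by_contra h2
          exact hno c hc h1 (hstep c b z hbc.2 (hSP b hb) hbc.1.symm h1 h2)
        · intro h1
          by_contra h2
          exact hno b hb h1 (hstep b c z (hSP b hb) hbc.2 hbc.1 h1 h2)
    by_cases hzu : G.Adj z u
    · left; intro s hs; exact (hall s hs).2 hzu
    · right; intro s hs h1; exact hzu ((hall s hs).1 h1)
  · exact Relation.ReflTransGen.single ⟨huv, hv⟩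
  · intro hS
    exact hw (hSP w (hS ▸ Set.mem_univ w))

/-- There is no adjacent twin of a vertex of the seven-vertex graph. -/
theorem no_twin {G : SimpleGraph V} (hP : P6Free G) (hB : BullFree G) (hPr : IsPrimeGraph G)
    {h : ℕ → V} (g : IsG7 G h) {p : ℕ} (hp : p < 7) (v : V) : ty G h v ≠ twinType p := by
  intro hv
  have tw1 : ∀ p < 7, ∀ i < 7, ((twinType p).testBit i = true ↔ (i = p ∨ (bRow p).testBit i)) := by
    decide
  have twlt : ∀ p < 7, twinType p < 128 := by decide
  have irr : ∀ p < 7, (bRow p).testBit p = false := by decide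
  have sym : ∀ p < 7, ∀ i < 7, (bRow p).testBit i = (bRow i).testBit p := by decide
  have dist : ∀ p < 7, ∃ j < 7, ∃ i < 7, i ≠ p ∧ (bRow j).testBit i ≠ (bRow p).testBit i := by
    decide
  let P : V → Prop := fun w => ∀ i < 7, i ≠ p → (G.Adj w (h i) ↔ (bRow p).testBit i = true)
  obtain ⟨j, hj, i, hi, hip, hne⟩ := dist p hp
  refine prime_edge hPr P (h j) ?_ ?_ (h p) v ?_ ?_ ?_
  · intro hPj
    apply hne
    rw [Bool.eq_iff_iff, ← hPj i hi hip, g j hj i hi]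
  · intro u v z hu hv huv hzu hzv
    have g' : IsG7 G (Function.update h p u) := by
      intro i hi j hj
      by_cases h1 : i = p
      · subst h1
        by_cases h2 : j = i
        · subst h2
          simp [irr j hj]
        · rw [Function.update_self, Function.update_of_ne h2]
          exact hu j hj h2
      · by_cases h2 : j = p
        · subst h2
          rw [Function.update_self, Function.update_of_ne h1, G.adj_comm, hu i hi h1, sym j hj i hi]
        · rw [Function.update_of_ne h1, Function.update_of_ne h2]
          exact g i hi j hj
    have htv : ty G (Function.update h p u) v = twinType p := by
      apply eq_of_bits (ty_lt _ _ _) (twlt p hp)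
      intro i hi
      rw [ty_bit _ _ _ hi, tw1 p hp i hi]
      by_cases h1 : i = p
      · subst h1
        simp [huv.symm]
      · rw [Function.update_of_ne h1, hv i hi h1]
        simp [h1]
    have hz := List.all_eq_true.1 (List.all_eq_true.1 check3 p (List.mem_range.2 hp)) _
      (ty_mem hP hB g' z)
    have hzp : (ty G (Function.update h p u) z).testBit p = true := by
      rw [ty_bit _ _ _ hp, Function.update_self]; exact hzu
    have hvz : ¬ G.Adj v z := fun h1 => hzv h1.symm
    have hz' : ty G (Function.update h p u) z = twinType p := by
      rcases Bool.or_eq_true_iff.1 hz with h1 | h1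
      · rcases Bool.or_eq_true_iff.1 h1 with h2 | h2
        · rw [hzp] at h2; simp at h2
        · exact beq_iff_eq.1 h2
      · exact absurd h1 (sound' hP hB g' list3 htv rfl rfl (by simp [hvz]) (by simp [hvz])
          (by simp))
    intro i hi hip
    have h3 := ty_bit G (Function.update h p u) z hi
    rw [hz', tw1 p hp i hi, Function.update_of_ne hip] at h3
    rw [← h3]; simp [hip]
  · intro i hi hip
    exact g p hp i hi
  · intro i hi hip
    have h3 := ty_bit G h v hi
    rw [hv, tw1 p hp i hi] at h3
    rw [← h3]; simp [hip]
  · have h3 := ty_bit G h v hp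
    rw [hv, tw1 p hp p hp] at h3
    exact (h3.1 (Or.inl rfl)).symm

theorem ty_zero_iff {G : SimpleGraph V} {h : ℕ → V} {v : V} (hv : ty G h v = 0) {i : ℕ}
    (hi : i < 7) : ¬ G.Adj v (h i) := by
  rw [← ty_bit G h v hi, hv]; simp

/-- Vertices reachable in `n` steps from the seven-vertex graph avoiding vertices of type 127. -/
inductive Reach (G : SimpleGraph V) (h : ℕ → V) : ℕ → V → Prop
  | base (i : ℕ) (hi : i < 7) : Reach G h 0 (h i)
  | step (n : ℕ) (y z : V) (hy : Reach G h n y) (hyz : G.Adj y z) (hz : ty G h z ≠ 127) :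
      Reach G h (n + 1) z

theorem reach_ne {G : SimpleGraph V} {h : ℕ → V} {n : ℕ} {v : V} (hv : Reach G h n v) :
    ty G h v ≠ 127 := by
  cases hv with
  | base i hi =>
    intro h1
    have h2 := ty_bit G h (h i) hi
    rw [h1] at h2
    have h3 : ∀ i < 7, (127 : ℕ).testBit i = true := by decide
    exact (G.loopless.irrefl _ (h2.1 (h3 i hi)))
  | step n y z hy hyz hz => exact hz

/-- No vertex is complete to the seven-vertex graph. -/
theorem no_full {G : SimpleGraph V} (hP : P6Free G) (hB : BullFree G) (hPr : IsPrimeGraph G)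
    {h : ℕ → V} (g : IsG7 G h) (a₀ : V) : ty G h a₀ ≠ 127 := by
  intro ha₀
  have full : ∀ i < 7, (127 : ℕ).testBit i = true := by decide
  have nonzero : ∀ v, ty G h v ≠ 0 → ty G h v ≠ 127 → ∀ a, ty G h a = 127 → G.Adj a v := by
    intro v hv0 hv1 a ha
    by_contra hav
    have h1 := List.all_eq_true.1 check2 _ (ty_mem hP hB g v)
    simp only [Bool.or_eq_true, beq_iff_eq] at h1
    rcases h1 with (h1 | h1) | h1
    · exact hv0 h1
    · exact hv1 h1
    · exact sound' hP hB g list2 ha rfl rfl (by simp [hav]) (by simp [hav]) (by simp) h1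
  have main : ∀ n v, Reach G h n v → ∀ a, ty G h a = 127 → G.Adj a v := by
    by_contra hcon
    classical
    have hex : ∃ n, ¬ ∀ v, Reach G h n v → ∀ a, ty G h a = 127 → G.Adj a v := by
      by_contra h1
      push Not at h1
      exact hcon h1
    have hmin := fun m => Nat.find_min hex (m := m)
    have hspec := Nat.find_spec hex
    generalize Nat.find hex = N at hmin hspec
    push Not at hspec
    obtain ⟨z, hz, a, ha, haz⟩ := hspec
    have hz0 : ty G h z = 0 := by
      by_contra h1
      exact haz (nonzero z h1 (reach_ne hz) a ha)
    cases hz with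
    | base i hi =>
      exact haz ((ty_bit G h a hi).1 (by rw [ha]; exact full i hi))
    | step n y z hy hyz hz1 =>
      have hay : G.Adj a y := by
        have h1 := hmin n (by omega)
        push Not at h1
        exact h1 y hy a ha
      by_cases hy0 : ty G h y = 0
      · cases hy with
        | base i hi =>
          exact ty_zero_iff hz0 hi hyz.symm
        | step m y' y hy' hyy hy1 =>
          have hay' : G.Adj a y' := by
            have h1 := hmin m (by omega)
            push Not at h1
            exact h1 y' hy' a ha
          have hzy' : ¬ G.Adj z y' := by
            intro h1
            have h2 := hmin (m + 1) (by omega)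
            push Not at h2
            exact haz (h2 z (Reach.step m y' z hy' h1.symm hz1) a ha)
          have hw : ∃ i < 7, ¬ G.Adj y' (h i) := by
            by_contra h1
            push Not at h1
            apply reach_ne hy'
            apply eq_of_bits (ty_lt _ _ _) (by norm_num)
            intro i hi
            rw [ty_bit G h y' hi]
            simp [h1 i hi, full i hi]
          obtain ⟨i, hi, hyi⟩ := hw
          have hai : G.Adj a (h i) := (ty_bit G h a hi).1 (by rw [ha]; exact full i hi)
          exact no_bull hB z y a (h i) y' hyz.symm hay.symm hai hyy.symm hay'
            (fun h1 => haz h1.symm) (ty_zero_iff hz0 hi) hzy' (ty_zero_iff hy0 hi)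
            (fun h1 => hyi h1.symm)
      · have h1 := List.all_eq_true.1 check2b _ (ty_mem hP hB g y)
        simp only [Bool.or_eq_true, beq_iff_eq] at h1
        rcases h1 with (h1 | h1) | h1
        · exact hy0 h1
        · exact reach_ne hy h1
        · exact sound' hP hB g list2b ha hz0 rfl (by simp [haz]) (by simp [hay])
            (by simp [hyz.symm]) h1
  apply hPr
  refine ⟨{v | ∃ n, Reach G h n v}, ?_, ⟨h 0, ⟨0, Reach.base 0 (by norm_num)⟩, h 1,
    ⟨0, Reach.base 1 (by norm_num)⟩, ?_⟩, ?_⟩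
  · intro v hv
    by_cases h1 : ty G h v = 127
    · left
      rintro s ⟨n, hs⟩
      exact main n s hs v h1
    · right
      rintro s ⟨n, hs⟩ hvs
      exact hv ⟨n + 1, Reach.step n s v hs hvs.symm h1⟩
  · have : G.Adj (h 0) (h 1) := (g 0 (by norm_num) 1 (by norm_num)).2 (by decide)
    exact this.ne
  · intro hS
    have : a₀ ∈ {v | ∃ n, Reach G h n v} := hS ▸ Set.mem_univ a₀
    obtain ⟨n, hn⟩ := this
    exact reach_ne hn ha₀

theorem ty_rem {G : SimpleGraph V} (hP : P6Free G) (hB : BullFree G) (hPr : IsPrimeGraph G)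
    {h : ℕ → V} (g : IsG7 G h) (v : V) : ty G h v = 15 ∨ ty G h v ∈ remTypes := by
  have h1 := List.all_eq_true.1 check6 _ (ty_mem hP hB g v)
  simp only [Bool.or_eq_true, beq_iff_eq, List.any_eq_true, List.mem_range] at h1
  rcases h1 with ((h1 | h1) | h1) | ⟨p, hp, h1⟩
  · exact Or.inr (List.contains_iff_mem.1 h1)
  · exact Or.inl h1
  · exact absurd h1 (no_full hP hB hPr g v)
  · exact absurd h1 (no_twin hP hB hPr g hp v)

/-- Two vertices of the same remaining type are not adjacent. -/
theorem same_type {G : SimpleGraph V} (hP : P6Free G) (hB : BullFree G) (hPr : IsPrimeGraph G)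
    {h : ℕ → V} (g : IsG7 G h) (u v : V) (hu : ty G h u ∈ remTypes)
    (huv : ty G h u = ty G h v) : ¬ G.Adj u v := by
  intro hadj
  have hw : ∃ w, ty G h w ≠ ty G h u := by
    by_contra h1
    push Not at h1
    have h2 : ty G h (h 0) = ty G h (h 1) := (h1 _).trans (h1 _).symm
    have h3 := ty_bit G h (h 0) (i := 1) (by norm_num)
    rw [h2, ty_bit G h (h 1) (by norm_num)] at h3
    exact (G.loopless.irrefl _ (h3.2 ((g 0 (by norm_num) 1 (by norm_num)).2 (by decide))))
  obtain ⟨w, hw⟩ := hw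
  refine prime_edge hPr (fun y => ty G h y = ty G h u) w hw ?_ u v rfl huv.symm hadj
  intro u' v' z hu' hv' hadj' hzu hzv
  by_contra hzt
  have hz := ty_rem hP hB hPr g z
  have h1 := List.all_eq_true.1 (List.all_eq_true.1 check4 _ hu) (ty G h z)
    (by simpa using hz)
  simp only [Bool.or_eq_true, beq_iff_eq] at h1
  rcases h1 with h1 | h1
  · exact hzt h1.symm
  · exact sound' hP hB g list4 hu' hv' rfl (by simp [hadj']) (by simp [hzu.symm])
      (by simp [mt G.adj_symm hzv]) h1

theorem sorted_triangle {G : SimpleGraph V} (hP : P6Free G) (hB : BullFree G)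
    {h : ℕ → V} (g : IsG7 G h) (a b e : V) (ha : ty G h a ∈ remTypes)
    (hb : ty G h b ∈ remTypes) (he : ty G h e ∈ remTypes) (hab : G.Adj a b) (hae : G.Adj a e)
    (hbe : G.Adj b e) (h1 : ty G h a < ty G h b) (h2 : ty G h b < ty G h e) : False := by
  have h3 := List.all_eq_true.1 (List.all_eq_true.1 check5 _ ha) _ hb
  simp only [Bool.or_eq_true, Bool.not_eq_true', Nat.blt_eq, ← Bool.not_eq_true] at h3
  rcases h3 with h3 | h3
  · exact h3 h1
  · have h4 := List.all_eq_true.1 h3 _ he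
    simp only [Bool.or_eq_true, Bool.not_eq_true', Nat.blt_eq, ← Bool.not_eq_true] at h4
    rcases h4 with h4 | h4
    · exact h4 h2
    · exact sound' hP hB g list5 rfl rfl rfl (by simp [hab]) (by simp [hae]) (by simp [hbe]) h4

theorem no_triangle {G : SimpleGraph V} (hP : P6Free G) (hB : BullFree G) (hPr : IsPrimeGraph G)
    {h : ℕ → V} (g : IsG7 G h) (a b e : V) (ha : ty G h a ≠ 15)
    (hb : ty G h b ≠ 15) (he : ty G h e ≠ 15) (hab : G.Adj a b) (hae : G.Adj a e)
    (hbe : G.Adj b e) : False := by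
  have ha' := (ty_rem hP hB hPr g a).resolve_left ha
  have hb' := (ty_rem hP hB hPr g b).resolve_left hb
  have he' := (ty_rem hP hB hPr g e).resolve_left he
  have n1 : ty G h a ≠ ty G h b := fun h1 => same_type hP hB hPr g a b ha' h1 hab
  have n2 : ty G h a ≠ ty G h e := fun h1 => same_type hP hB hPr g a e ha' h1 hae
  have n3 : ty G h b ≠ ty G h e := fun h1 => same_type hP hB hPr g b e hb' h1 hbe
  rcases lt_or_gt_of_ne n1 with h1 | h1 <;> rcases lt_or_gt_of_ne n2 with h2 | h2 <;>
    rcases lt_or_gt_of_ne n3 with h3 | h3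
  · exact sorted_triangle hP hB g a b e ha' hb' he' hab hae hbe h1 h3
  · exact sorted_triangle hP hB g a e b ha' he' hb' hae hab hbe.symm h2 h3
  · omega
  · exact sorted_triangle hP hB g e a b he' ha' hb' hae.symm hbe.symm hab h2 h1
  · exact sorted_triangle hP hB g b a e hb' ha' he' hab.symm hbe hae h1 h2
  · omega
  · exact sorted_triangle hP hB g b e a hb' he' ha' hbe hab.symm hae.symm h3 h2
  · exact sorted_triangle hP hB g e b a he' hb' ha' hbe.symm hae.symm hab.symm h3 h1

theorem stmt12 (G : SimpleGraph V) [DecidableRel G.Adj]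
    (hP : P6Free G) (hB : BullFree G) (hPr : IsPrimeGraph G)
    (c : Fin 5 → V) (hc : IsInducedC5 G c)
    (d : V) (hd : d ∉ Set.range c)
    (hd0 : G.Adj d (c 0)) (hd3 : G.Adj d (c 3))
    (hdno : ∀ i : Fin 5, i ≠ 0 → i ≠ 3 → ¬ G.Adj d (c i))
    (x : V) (hx : x ∉ Set.range c) (hxd : G.Adj x d) (hxne : x ≠ d)
    (hx0 : ∀ i : Fin 5, ¬ G.Adj x (c i))
    (F : Set V) (hF : F = {v : V | v ∉ Set.range c ∧ nbrCount G c v = 4}) :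
    ¬ ∃ a b e : V, a ∉ F ∧ b ∉ F ∧ e ∉ F ∧ G.Adj a b ∧ G.Adj a e ∧ G.Adj b e := by
  rintro ⟨a, b, e, ha, hb, he, hab, hae, hbe⟩
  let h : ℕ → V := fun i => match i with
    | 0 => c 0
    | 1 => c 1
    | 2 => c 2
    | 3 => c 3
    | 4 => c 4
    | 5 => d
    | _ => x
  have d1 := hdno 1 (by decide) (by decide)
  have d2 := hdno 2 (by decide) (by decide)
  have d4 := hdno 4 (by decide) (by decide)
  have g : IsG7 G h := by
    have hcc : ∀ i j : Fin 5, G.Adj (c i) (c j) ↔ (bRow i.val).testBit j.val = true := by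
      intro i j
      rw [hc.2]
      revert i j
      decide
    have hcd : ∀ i : Fin 5, G.Adj (c i) d ↔ (bRow i.val).testBit 5 = true := by
      intro i
      rw [G.adj_comm]
      fin_cases i
      · exact ⟨fun _ => by decide, fun _ => hd0⟩
      · exact ⟨fun h1 => absurd h1 d1, fun h1 => absurd h1 (by decide)⟩
      · exact ⟨fun h1 => absurd h1 d2, fun h1 => absurd h1 (by decide)⟩
      · exact ⟨fun _ => by decide, fun _ => hd3⟩
      · exact ⟨fun h1 => absurd h1 d4, fun h1 => absurd h1 (by decide)⟩
    have hcx : ∀ i : Fin 5, G.Adj (c i) x ↔ (bRow i.val).testBit 6 = true := by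
      intro i
      have h1 : (bRow i.val).testBit 6 = false := by revert i; decide
      rw [h1, G.adj_comm]
      simp [hx0 i]
    have hsym : ∀ i < 7, ∀ j < 7, (bRow i).testBit j = (bRow j).testBit i := by decide
    have hlow : ∀ i < 5, ∃ k : Fin 5, k.val = i ∧ h i = c k := by
      intro i hi
      interval_cases i
      · exact ⟨0, rfl, rfl⟩
      · exact ⟨1, rfl, rfl⟩
      · exact ⟨2, rfl, rfl⟩
      · exact ⟨3, rfl, rfl⟩
      · exact ⟨4, rfl, rfl⟩
    have hle : ∀ i < 7, ∀ j < 7, i ≤ j → (G.Adj (h i) (h j) ↔ (bRow i).testBit j = true) := by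
      intro i hi j hj hij
      by_cases hj5 : j < 5
      · obtain ⟨k, rfl, hk⟩ := hlow i (by omega)
        obtain ⟨l, rfl, hl⟩ := hlow j hj5
        rw [hk, hl]
        exact hcc k l
      · by_cases hi5 : i < 5
        · obtain ⟨k, rfl, hk⟩ := hlow i hi5
          rw [hk]
          have : j = 5 ∨ j = 6 := by omega
          rcases this with rfl | rfl
          · exact hcd k
          · exact hcx k
        · have : (i = 5 ∧ j = 5) ∨ (i = 5 ∧ j = 6) ∨ (i = 6 ∧ j = 6) := by omega
          rcases this with ⟨rfl, rfl⟩ | ⟨rfl, rfl⟩ | ⟨rfl, rfl⟩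
          · exact ⟨fun h1 => absurd rfl h1.ne, fun h1 => absurd h1 (by decide)⟩
          · exact ⟨fun _ => by decide, fun _ => hxd.symm⟩
          · exact ⟨fun h1 => absurd rfl h1.ne, fun h1 => absurd h1 (by decide)⟩
    intro i hi j hj
    rcases le_total i j with h1 | h1
    · exact hle i hi j hj h1
    · rw [G.adj_comm, hle j hj i hi h1, hsym j hj i hi]
  have hF15 : ∀ v, v ∉ F → ty G h v ≠ 15 := by
    intro v hv ht
    apply hv
    have a0 : G.Adj v (c 0) := (ty_bit G h v (i := 0) (by norm_num)).1 (by rw [ht]; decide)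
    have a1 : G.Adj v (c 1) := (ty_bit G h v (i := 1) (by norm_num)).1 (by rw [ht]; decide)
    have a2 : G.Adj v (c 2) := (ty_bit G h v (i := 2) (by norm_num)).1 (by rw [ht]; decide)
    have a3 : G.Adj v (c 3) := (ty_bit G h v (i := 3) (by norm_num)).1 (by rw [ht]; decide)
    have a4 : ¬ G.Adj v (c 4) := fun h1 =>
      absurd ((ty_bit G h v (i := 4) (by norm_num)).2 h1) (by rw [ht]; decide)
    rw [hF]
    refine ⟨?_, ?_⟩
    · rintro ⟨i, rfl⟩
      rw [hc.2] at a0 a1 a2 a3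
      clear hv ht a4
      revert i
      decide
    · unfold nbrCount
      have : (Finset.univ.filter fun i : Fin 5 => G.Adj v (c i)) = {0, 1, 2, 3} := by
        ext i
        fin_cases i <;> simp [a0, a1, a2, a3, a4]
      rw [this]
      decide
  exact no_triangle hP hB hPr g a b e (hF15 a ha) (hF15 b hb) (hF15 e he) hab hae hbe
end

section
/- Let G be a prime (P6, bull)-free graph, let x be a vertex of G, and let K be a connected component of the subgraph induced on the non-neighbors of x (excluding x). Then either K is a perfect graph or K contains an induced 5-cycle. -/
open SimpleGraph

variable {V : Type*}

/-- The clique number of a graph, as an extended natural number. -/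
noncomputable def cliqueNumE {W : Type*} (H : SimpleGraph W) : ℕ∞ :=
  sSup {n : ℕ∞ | ∃ m : ℕ, n = m ∧ ∃ t : Finset W, H.IsNClique m t}

/-- A graph is perfect if every induced subgraph has chromatic number equal to
its clique number. -/
def IsPerfect {W : Type*} (H : SimpleGraph W) : Prop :=
  ∀ S : Set W, (H.induce S).chromaticNumber = cliqueNumE (H.induce S)


section Helpers

/-- Bull-freeness, in a form that only needs adjacency facts. -/
theorem BullFree.elim {G : SimpleGraph V} (hB : BullFree G) {a b c d e : V}
    (h1 : G.Adj a b) (h2 : G.Adj b c) (h3 : G.Adj c d) (h4 : G.Adj b e) (h5 : G.Adj c e)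
    (n1 : ¬ G.Adj a c) (n2 : ¬ G.Adj a d) (n3 : ¬ G.Adj a e) (n4 : ¬ G.Adj b d)
    (n5 : ¬ G.Adj d e) : False := by
  apply hB a b c d e
  refine ⟨h1.ne, ?_, ?_, ?_, h2.ne, ?_, h4.ne, h3.ne, h5.ne, ?_, h1, h2, h3, h4, h5,
    n1, n2, n3, n4, n5⟩
  · rintro rfl; exact n2 h3
  · rintro rfl; exact n1 h3.symm
  · rintro rfl; exact n1 h5.symm
  · rintro rfl; exact n2 h1
  · rintro rfl; exact n4 h4

/-- P6-freeness, in a form that only needs adjacency facts. -/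
theorem P6Free.elim {G : SimpleGraph V} (hP : P6Free G) {a b c d e f : V}
    (h1 : G.Adj a b) (h2 : G.Adj b c) (h3 : G.Adj c d) (h4 : G.Adj d e) (h5 : G.Adj e f)
    (n1 : ¬ G.Adj a c) (n2 : ¬ G.Adj a d) (n3 : ¬ G.Adj a e) (n4 : ¬ G.Adj a f)
    (n5 : ¬ G.Adj b d) (n6 : ¬ G.Adj b e) (n7 : ¬ G.Adj b f)
    (n8 : ¬ G.Adj c e) (n9 : ¬ G.Adj c f) (n10 : ¬ G.Adj d f) : False := by
  apply hP
  refine ⟨![a, b, c, d, e, f], ?_, ?_⟩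
  · intro i j hij
    fin_cases i <;> fin_cases j <;> simp at hij ⊢ <;> subst hij <;>
      simp_all [SimpleGraph.adj_comm]
  · intro i j
    fin_cases i <;> fin_cases j <;> simp <;>
      first | assumption | (apply SimpleGraph.Adj.symm; assumption) | (intro h; exact absurd h.symm ‹_›)

/-- Vertices of an induced 5-cycle. -/
theorem inducedC5_of {G : SimpleGraph V} {a b c d e : V}
    (h1 : G.Adj a b) (h2 : G.Adj b c) (h3 : G.Adj c d) (h4 : G.Adj d e) (h5 : G.Adj e a)
    (n1 : ¬ G.Adj a c) (n2 : ¬ G.Adj a d) (n3 : ¬ G.Adj b d) (n4 : ¬ G.Adj b e)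
    (n5 : ¬ G.Adj c e) : IsInducedC5 G ![a, b, c, d, e] := by
  refine ⟨?_, ?_⟩
  · intro i j hij
    fin_cases i <;> fin_cases j <;> simp at hij ⊢ <;> subst hij <;>
      simp_all [SimpleGraph.adj_comm]
  · intro i j
    fin_cases i <;> fin_cases j <;> simp <;>
      first | assumption | (apply SimpleGraph.Adj.symm; assumption) | (intro h; exact absurd h.symm ‹_›)

/-- The set of all the hypotheses describing a minimal imperfect set `M`, together with a
vertex `p` anticomplete to `M` and a neighbour `y` of `p`. -/
structure Ctx (G : SimpleGraph V) (M : Set V) (p y : V) : Prop where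
  hP : P6Free G
  hB : BullFree G
  hC : ∀ a ∈ M, ∀ b ∈ M, ∀ c ∈ M, ∀ d ∈ M, ∀ e ∈ M, ¬ IsInducedC5 G ![a, b, c, d, e]
  hp : ∀ v ∈ M, ¬ G.Adj p v
  hpy : G.Adj p y
  hy0 : ∃ v ∈ M, ¬ G.Adj y v
  hH : ∀ D ⊆ M, (∃ a ∈ D, ∃ b ∈ D, a ≠ b) →
    (∀ v ∈ M, v ∉ D → (∀ d ∈ D, G.Adj v d) ∨ (∀ d ∈ D, ¬ G.Adj v d)) → M ⊆ D

/-- A subset whose edges are not distinguished from outside has no edge at all. -/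
theorem Ctx.stable {G : SimpleGraph V} {M : Set V} {p y : V} (h : Ctx G M p y) (U : Set V)
    (hUM : U ⊆ M) (hne : ∃ v ∈ M, v ∉ U)
    (hU : ∀ d ∈ U, ∀ d' ∈ U, G.Adj d d' → ∀ z ∈ M, z ∉ U → G.Adj z d → G.Adj z d') :
    ∀ u ∈ U, ∀ v ∈ U, ¬ G.Adj u v := by
  intro u hu v hv huv
  let D : Set V := {w | Relation.ReflTransGen (fun s t => G.Adj s t ∧ s ∈ U ∧ t ∈ U) u w}
  have hDU : D ⊆ U := by
    intro w hw
    rcases Relation.ReflTransGen.cases_tail hw with h | ⟨_, _, h⟩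
    · exact h ▸ hu
    · exact h.2.2
  have huD : u ∈ D := Relation.ReflTransGen.refl
  have hvD : v ∈ D := Relation.ReflTransGen.single ⟨huv, hu, hv⟩
  have hM := h.hH D (hDU.trans hUM) ⟨u, huD, v, hvD, huv.ne⟩ (by
    intro z hz hzD
    have hzU : ∀ d ∈ D, G.Adj z d → z ∉ U := by
      intro d hd hzd hzU
      exact hzD (Relation.ReflTransGen.tail hd ⟨hzd.symm, hDU hd, hzU⟩)
    have key : ∀ d ∈ D, (G.Adj z d ↔ G.Adj z u) := by
      intro d hd
      induction hd with
      | refl => rfl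
      | tail hst hs ih =>
        rename_i s t
        rw [← ih]
        have hsD : s ∈ D := hst
        have htD : t ∈ D := Relation.ReflTransGen.tail hst hs
        constructor
        · intro hzt
          exact hU t hs.2.2 s hs.2.1 hs.1.symm z hz (hzU t htD hzt) hzt
        · intro hzs
          exact hU s hs.2.1 t hs.2.2 hs.1 z hz (hzU s hsD hzs) hzs
    by_cases hzu : G.Adj z u
    · left; intro d hd; exact (key d hd).2 hzu
    · right; intro d hd h'; exact hzu ((key d hd).1 h'))
  obtain ⟨w, hw, hwU⟩ := hne
  exact hwU (hDU (hM hw))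

/-- The neighbours of `y` in `M` form a stable set. -/
theorem Ctx.stableA {G : SimpleGraph V} {M : Set V} {p y : V} (h : Ctx G M p y) {u v : V}
    (hu : u ∈ M) (hv : v ∈ M) (hyu : G.Adj y u) (hyv : G.Adj y v) : ¬ G.Adj u v := by
  refine h.stable {w | w ∈ M ∧ G.Adj y w} (fun w hw => hw.1) ?_ ?_ u ⟨hu, hyu⟩ v ⟨hv, hyv⟩
  · obtain ⟨v, hv, hv'⟩ := h.hy0
    exact ⟨v, hv, fun hh => hv' hh.2⟩
  · rintro d ⟨hd, hyd⟩ d' ⟨hd', hyd'⟩ hdd z hz hzU hzd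
    by_contra hzd'
    have hyz : ¬ G.Adj y z := fun hh => hzU ⟨hz, hh⟩
    exact h.hB.elim h.hpy hyd hzd.symm hyd' hdd (h.hp d hd) (h.hp z hz) (h.hp d' hd') hyz hzd'

/-- The vertices of `M` with no neighbour in `{y} ∪ N(y)` form a stable set. -/
theorem Ctx.stableB {G : SimpleGraph V} {M : Set V} {p y : V} (h : Ctx G M p y)
    (hy1 : ∃ v ∈ M, G.Adj y v) {u v : V}
    (hu : u ∈ M) (hv : v ∈ M) (hyu : ¬ G.Adj y u) (hyv : ¬ G.Adj y v)
    (hu' : ∀ a ∈ M, G.Adj y a → ¬ G.Adj a u) (hv' : ∀ a ∈ M, G.Adj y a → ¬ G.Adj a v) :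
    ¬ G.Adj u v := by
  refine h.stable {w | w ∈ M ∧ ¬ G.Adj y w ∧ ∀ a ∈ M, G.Adj y a → ¬ G.Adj a w}
    (fun w hw => hw.1) ?_ ?_ u ⟨hu, hyu, hu'⟩ v ⟨hv, hyv, hv'⟩
  · obtain ⟨v, hv, hv'⟩ := hy1
    exact ⟨v, hv, fun hh => hh.2.1 hv'⟩
  · rintro d ⟨hd, hyd, hd0⟩ d' ⟨hd', hyd', hd0'⟩ hdd z hz hzU hzd
    by_contra hzd'
    have hyz : ¬ G.Adj y z := fun hh => hd0 z hz hh hzd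
    have : ∃ a ∈ M, G.Adj y a ∧ G.Adj a z := by
      by_contra! hh
      exact hzU ⟨hz, hyz, hh⟩
    obtain ⟨a, ha, hya, haz⟩ := this
    exact h.hP.elim h.hpy hya haz hzd hdd (h.hp a ha) (h.hp z hz) (h.hp d hd) (h.hp d' hd')
      hyz hyd hyd' (hd0 a ha hya) (hd0' a ha hya) hzd'

/-- A path `a b c d` in `M` whose ends are adjacent to `y` and whose inner vertices are not. -/
structure Vld (G : SimpleGraph V) (M : Set V) (y a b c d : V) : Prop where
  ma : a ∈ M
  mb : b ∈ M
  mc : c ∈ M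
  md : d ∈ M
  ya : G.Adj y a
  yd : G.Adj y d
  yb : ¬ G.Adj y b
  yc : ¬ G.Adj y c
  ab : G.Adj a b
  bc : G.Adj b c
  cd : G.Adj c d
  ac : ¬ G.Adj a c
  bd : ¬ G.Adj b d
  ad : ¬ G.Adj a d

theorem Vld.rev {G : SimpleGraph V} {M : Set V} {y a b c d : V} (v : Vld G M y a b c d) :
    Vld G M y d c b a :=
  ⟨v.md, v.mc, v.mb, v.ma, v.yd, v.ya, v.yc, v.yb, v.cd.symm, v.bc.symm, v.ab.symm,
    fun h => v.bd h.symm, fun h => v.ac h.symm, fun h => v.ad h.symm⟩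

/-- Half of the classification: the forbidden attachments to a valid path (one orientation). -/
theorem Ctx.forb {G : SimpleGraph V} {M : Set V} {p y : V} (h : Ctx G M p y) {a b c d z : V}
    (v : Vld G M y a b c d) (hz : z ∈ M) :
    (G.Adj y z → G.Adj z b → G.Adj z c → False) ∧
    (¬ G.Adj y z → G.Adj z b → ¬ G.Adj z c → ¬ G.Adj z d → False) ∧
    (¬ G.Adj y z → ¬ G.Adj z a → G.Adj z b → G.Adj z c → ¬ G.Adj z d → False) ∧
    (¬ G.Adj y z → G.Adj z a → G.Adj z b → ¬ G.Adj z c → False) ∧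
    (¬ G.Adj y z → G.Adj z a → G.Adj z d → ¬ G.Adj z b → ¬ G.Adj z c → False) := by
  have sy := fun u w => G.adj_comm u w
  obtain ⟨ma, mb, mc, md, ya, yd, yb, yc, ab, bc, cd, ac, bd, ad⟩ := v
  have hpa := h.hp a ma
  have hpb := h.hp b mb
  have hpc := h.hp c mc
  have hpd := h.hp d md
  have hpz := h.hp z hz
  have h4 : ¬ G.Adj y z → G.Adj z a → G.Adj z b → ¬ G.Adj z c → False := by
    intro yz za zb zc
    exact h.hB.elim ya ab bc za.symm zb.symm yb yc yz ac (fun h => zc h.symm)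
  refine ⟨?_, ?_, ?_, h4, ?_⟩
  · intro yz zb zc
    have za := h.stableA hz ma yz ya
    have zd := h.stableA hz md yz yd
    exact h.hB.elim ab bc cd zb.symm zc.symm ac ad (fun h => za h.symm) bd (fun h => zd h.symm)
  · intro yz zb zc zd
    by_cases za : G.Adj z a
    · exact h4 yz za zb zc
    · exact h.hP.elim h.hpy yd cd.symm bc.symm zb.symm hpd hpc hpb hpz yc yb yz
        (fun h => bd h.symm) (fun h => zd h.symm) (fun h => zc h.symm)
  · intro yz za zb zc zd
    exact h.hB.elim ab bc cd zb.symm zc.symm ac ad (fun h => za h.symm) bd (fun h => zd h.symm)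
  · intro yz za zd zb zc
    exact h.hC a ma b mb c mc d md z hz (inducedC5_of ab bc cd zd.symm za ac ad bd
      (fun h => zb h.symm) (fun h => zc h.symm))

/-- No vertex of `M` is an adjacent twin of `b` with respect to a valid path. -/
theorem Ctx.noTwin {G : SimpleGraph V} {M : Set V} {p y : V} (h : Ctx G M p y) {a b c d z : V}
    (v : Vld G M y a b c d) (hz : z ∈ M) (yz : ¬ G.Adj y z) (za : G.Adj z a) (zb : G.Adj z b)
    (zc : G.Adj z c) (zd : ¬ G.Adj z d) : False := by
  refine h.stable {w | w ∈ M ∧ ¬ G.Adj y w ∧ G.Adj w a ∧ G.Adj w c ∧ ¬ G.Adj w d}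
    (fun w hw => hw.1) ⟨a, v.ma, fun hh => hh.2.1 v.ya⟩ ?_ z ⟨hz, yz, za, zc, zd⟩ b
    ⟨v.mb, v.yb, v.ab.symm, v.bc, v.bd⟩ zb
  rintro f ⟨mf, yf, fa, fc, fd⟩ f' ⟨mf', yf', fa', fc', fd'⟩ ff t mt htU tf
  by_contra tf'
  have v1 : Vld G M y a f c d := { v with mb := mf, yb := yf, ab := fa.symm, bc := fc, bd := fd }
  have v2 : Vld G M y a f' c d :=
    { v with mb := mf', yb := yf', ab := fa'.symm, bc := fc', bd := fd' }
  have f1 := h.forb v1 mt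
  have f1r := h.forb v1.rev mt
  have f2r := h.forb v2.rev mt
  -- if `t` misses `c` then it sees `d`
  have hc : ¬ G.Adj t c → G.Adj t d := by
    intro tc
    by_contra td
    exact h.hB.elim tf fc v.cd ff fc'.symm tc td tf' fd (fun h => fd' h.symm)
  by_cases yt : G.Adj y t
  · have td := h.stableA mt v.md yt v.yd
    have tc : G.Adj t c := by
      by_contra tc
      exact td (hc tc)
    exact f1.1 yt tf tc
  · have ta : G.Adj t a := by
      by_contra ta
      exact h.hB.elim tf fa v.ya.symm ff fa'.symm ta (fun h => yt h.symm) tf' (fun h => yf h.symm) yf'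
    by_cases tc : G.Adj t c
    · have td : G.Adj t d := by
        by_contra td
        exact htU ⟨mt, yt, ta, tc, td⟩
      exact f2r.2.2.2.1 yt td tc tf'
    · exact f1.2.2.2.1 yt ta tf tc

/-- The vertices of a path. -/
def onP (a b c d z : V) : Prop := z = a ∨ z = b ∨ z = c ∨ z = d

/-- Attachment types that produce a new valid path. -/
def StepType (G : SimpleGraph V) (y a b c d z : V) : Prop :=
  (G.Adj y z ∧ G.Adj z b ∧ ¬ G.Adj z c) ∨ (G.Adj y z ∧ G.Adj z c ∧ ¬ G.Adj z b) ∨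
  (¬ G.Adj y z ∧ G.Adj z a ∧ G.Adj z c ∧ ¬ G.Adj z d) ∨
  (¬ G.Adj y z ∧ G.Adj z d ∧ G.Adj z b ∧ ¬ G.Adj z a)

/-- Pendant attachment types. -/
def EndType (G : SimpleGraph V) (a b c d z : V) : Prop :=
  (G.Adj z a ∧ ¬ G.Adj z b ∧ ¬ G.Adj z c ∧ ¬ G.Adj z d) ∨
  (G.Adj z d ∧ ¬ G.Adj z b ∧ ¬ G.Adj z c ∧ ¬ G.Adj z a)

/-- Complete to a path. -/
def CompType (G : SimpleGraph V) (a b c d z : V) : Prop :=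
  G.Adj z a ∧ G.Adj z b ∧ G.Adj z c ∧ G.Adj z d

/-- Anticomplete to a path. -/
def AntiType (G : SimpleGraph V) (a b c d z : V) : Prop :=
  ¬ G.Adj z a ∧ ¬ G.Adj z b ∧ ¬ G.Adj z c ∧ ¬ G.Adj z d

theorem Ctx.types {G : SimpleGraph V} {M : Set V} {p y : V} (h : Ctx G M p y) {a b c d z : V}
    (v : Vld G M y a b c d) (hz : z ∈ M) :
    CompType G a b c d z ∨ AntiType G a b c d z ∨ StepType G y a b c d z ∨
      EndType G a b c d z := by
  obtain ⟨f1, f2, f3, f4, f5⟩ := h.forb v hz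
  obtain ⟨g1, g2, g3, g4, g5⟩ := h.forb v.rev hz
  have hA : G.Adj y z → ¬ G.Adj z a ∧ ¬ G.Adj z d :=
    fun yz => ⟨h.stableA hz v.ma yz v.ya, h.stableA hz v.md yz v.yd⟩
  unfold CompType AntiType StepType EndType
  clear v h
  generalize G.Adj y z = yz at *
  generalize G.Adj z a = za at *
  generalize G.Adj z b = zb at *
  generalize G.Adj z c = zc at *
  generalize G.Adj z d = zd at *
  by_cases h0 : yz <;> by_cases h1 : za <;> by_cases h2 : zb <;>
    by_cases h3 : zc <;> by_cases h4 : zd <;>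
    simp only [h0, h1, h2, h3, h4, not_true, not_false_eq_true, true_imp_iff, false_imp_iff,
      and_true, true_and, and_false, false_and, or_true, true_or, or_false, false_or, imp_false]
      at *

theorem Ctx.compStep {G : SimpleGraph V} {M : Set V} {p y : V} (h : Ctx G M p y)
    {a b c d w z : V} (v : Vld G M y a b c d) (hw : w ∈ M) (hz : z ∈ M)
    (cw : CompType G a b c d w) (sz : StepType G y a b c d z) : G.Adj w z := by
  obtain ⟨wa, wb, wc, wd⟩ := cw
  have yw : ¬ G.Adj y w := fun yw => h.stableA hw v.ma yw v.ya wa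
  by_contra wz
  rcases sz with ⟨yz, zb, zc⟩ | ⟨yz, zc, zb⟩ | ⟨yz, za, zc, zd⟩ | ⟨yz, zd, zb, za⟩
  · have v1 : Vld G M y z b c d :=
      { v with ma := hz, ya := yz, ab := zb, ac := zc, ad := h.stableA hz v.md yz v.yd }
    exact h.noTwin v1.rev hw yw wd wc wb wz
  · have v1 : Vld G M y a b c z :=
      { v with md := hz, yd := yz, cd := zc.symm, bd := fun h => zb h.symm,
               ad := h.stableA v.ma hz v.ya yz }
    exact h.noTwin v1 hw yw wa wb wc wz
  · have v1 : Vld G M y a z c d :=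
      { v with mb := hz, yb := yz, ab := za.symm, bc := zc, bd := zd }
    exact (h.forb v1.rev hw).2.2.2.1 yw wd wc wz
  · have v1 : Vld G M y a b z d :=
      { v with mc := hz, yc := yz, bc := zb.symm, cd := zd, ac := fun h => za h.symm }
    exact (h.forb v1 hw).2.2.2.1 yw wa wb wz

theorem Ctx.compEnd {G : SimpleGraph V} {M : Set V} {p y : V} (h : Ctx G M p y)
    {a b c d w z : V} (v : Vld G M y a b c d)
    (cw : CompType G a b c d w) (sz : EndType G a b c d z) : G.Adj w z := by
  obtain ⟨wa, wb, wc, wd⟩ := cw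
  by_contra wz
  rcases sz with ⟨za, zb, zc, zd⟩ | ⟨zd, zb, zc, za⟩
  · exact h.hB.elim za wa.symm wd v.ab wb (fun h => wz h.symm) zd zb v.ad
      (fun h => v.bd h.symm)
  · exact h.hB.elim zd wd.symm wa v.cd.symm wc (fun h => wz h.symm) za zc
      (fun h => v.ad h.symm) v.ac

theorem Ctx.antiEnd {G : SimpleGraph V} {M : Set V} {p y : V} (h : Ctx G M p y)
    {a b c d w z : V} (v : Vld G M y a b c d)
    (cw : AntiType G a b c d w) (sz : EndType G a b c d z) : ¬ G.Adj w z := by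
  obtain ⟨wa, wb, wc, wd⟩ := cw
  intro wz
  rcases sz with ⟨za, zb, zc, zd⟩ | ⟨zd, zb, zc, za⟩
  · exact h.hP.elim wz za v.ab v.bc v.cd wa wb wc wd zb zc zd v.ac v.ad v.bd
  · exact h.hP.elim wz zd v.cd.symm v.bc.symm v.ab.symm wd wc wb wa zc zb za
      v.rev.ac v.rev.ad v.rev.bd

/-- The valid paths reachable from a given one, all complete to `w`. -/
inductive Reach_s14 (G : SimpleGraph V) (M : Set V) (y w a₀ b₀ c₀ d₀ : V) :
    V → V → V → V → Prop
  | base : Reach_s14 G M y w a₀ b₀ c₀ d₀ a₀ b₀ c₀ d₀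
  | stepA {a b c d a' : V} : Reach_s14 G M y w a₀ b₀ c₀ d₀ a b c d → Vld G M y a' b c d →
      CompType G a' b c d w → Reach_s14 G M y w a₀ b₀ c₀ d₀ a' b c d
  | stepB {a b c d b' : V} : Reach_s14 G M y w a₀ b₀ c₀ d₀ a b c d → Vld G M y a b' c d →
      CompType G a b' c d w → Reach_s14 G M y w a₀ b₀ c₀ d₀ a b' c d
  | stepC {a b c d c' : V} : Reach_s14 G M y w a₀ b₀ c₀ d₀ a b c d → Vld G M y a b c' d →
      CompType G a b c' d w → Reach_s14 G M y w a₀ b₀ c₀ d₀ a b c' d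
  | stepD {a b c d d' : V} : Reach_s14 G M y w a₀ b₀ c₀ d₀ a b c d → Vld G M y a b c d' →
      CompType G a b c d' w → Reach_s14 G M y w a₀ b₀ c₀ d₀ a b c d'

/-- There is no valid path with a vertex complete to it. -/
theorem Ctx.noComp {G : SimpleGraph V} {M : Set V} {p y : V} (h : Ctx G M p y)
    {a₀ b₀ c₀ d₀ w : V} (v₀ : Vld G M y a₀ b₀ c₀ d₀) (hw : w ∈ M)
    (cw₀ : CompType G a₀ b₀ c₀ d₀ w) : False := by
  let R := Reach_s14 G M y w a₀ b₀ c₀ d₀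
  have hR : ∀ a b c d, R a b c d → Vld G M y a b c d ∧ CompType G a b c d w := by
    intro a b c d hr
    cases hr with
    | base => exact ⟨v₀, cw₀⟩
    | stepA _ h1 h2 => exact ⟨h1, h2⟩
    | stepB _ h1 h2 => exact ⟨h1, h2⟩
    | stepC _ h1 h2 => exact ⟨h1, h2⟩
    | stepD _ h1 h2 => exact ⟨h1, h2⟩
  let S : Set V := {z | ∃ a b c d, R a b c d ∧ onP a b c d z}
  let Z : Set V := {z | z ∈ M ∧ ∃ a b c d, R a b c d ∧ EndType G a b c d z}
  -- step types lie in `S`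
  have hstep : ∀ z ∈ M, ∀ a b c d, R a b c d → StepType G y a b c d z → z ∈ S := by
    intro z hz a b c d hr sz
    obtain ⟨v, cw⟩ := hR a b c d hr
    have wz := h.compStep v hw hz cw sz
    obtain ⟨wa, wb, wc, wd⟩ := cw
    rcases sz with ⟨yz, zb, zc⟩ | ⟨yz, zc, zb⟩ | ⟨yz, za, zc, zd⟩ | ⟨yz, zd, zb, za⟩
    · have v1 : Vld G M y z b c d :=
        { v with ma := hz, ya := yz, ab := zb, ac := zc, ad := h.stableA hz v.md yz v.yd }
      exact ⟨z, b, c, d, Reach_s14.stepA hr v1 ⟨wz, wb, wc, wd⟩, Or.inl rfl⟩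
    · have v1 : Vld G M y a b c z :=
        { v with md := hz, yd := yz, cd := zc.symm, bd := fun h => zb h.symm,
                 ad := h.stableA v.ma hz v.ya yz }
      exact ⟨a, b, c, z, Reach_s14.stepD hr v1 ⟨wa, wb, wc, wz⟩, Or.inr (Or.inr (Or.inr rfl))⟩
    · have v1 : Vld G M y a z c d :=
        { v with mb := hz, yb := yz, ab := za.symm, bc := zc, bd := zd }
      exact ⟨a, z, c, d, Reach_s14.stepB hr v1 ⟨wa, wz, wc, wd⟩, Or.inr (Or.inl rfl)⟩
    · have v1 : Vld G M y a b z d :=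
        { v with mc := hz, yc := yz, bc := zb.symm, cd := zd, ac := fun h => za h.symm }
      exact ⟨a, b, z, d, Reach_s14.stepC hr v1 ⟨wa, wb, wz, wd⟩, Or.inr (Or.inr (Or.inl rfl))⟩
  -- a vertex outside of `S ∪ Z` is complete or anticomplete to all reachable paths
  have hout : ∀ z ∈ M, z ∉ S ∪ Z →
      (∀ a b c d, R a b c d → CompType G a b c d z) ∨
      (∀ a b c d, R a b c d → AntiType G a b c d z) := by
    intro z hz hzS
    have hty : ∀ a b c d, R a b c d → CompType G a b c d z ∨ AntiType G a b c d z := by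
      intro a b c d hr
      rcases h.types (hR a b c d hr).1 hz with h1 | h1 | h1 | h1
      · exact Or.inl h1
      · exact Or.inr h1
      · exact absurd (Or.inl (hstep z hz a b c d hr h1)) hzS
      · exact absurd (Or.inr ⟨hz, a, b, c, d, hr, h1⟩) hzS
    have aux : ∀ a b c d, R a b c d →
        (CompType G a b c d z ↔ CompType G a₀ b₀ c₀ d₀ z) := by
      intro a b c d hr
      induction hr with
      | base => rfl
      | stepA h0 h1 h2 ih =>
        rw [← ih]
        have t1 := hty _ _ _ _ h0
        have t2 := hty _ _ _ _ (Reach_s14.stepA h0 h1 h2)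
        unfold CompType AntiType at *; tauto
      | stepB h0 h1 h2 ih =>
        rw [← ih]
        have t1 := hty _ _ _ _ h0
        have t2 := hty _ _ _ _ (Reach_s14.stepB h0 h1 h2)
        unfold CompType AntiType at *; tauto
      | stepC h0 h1 h2 ih =>
        rw [← ih]
        have t1 := hty _ _ _ _ h0
        have t2 := hty _ _ _ _ (Reach_s14.stepC h0 h1 h2)
        unfold CompType AntiType at *; tauto
      | stepD h0 h1 h2 ih =>
        rw [← ih]
        have t1 := hty _ _ _ _ h0
        have t2 := hty _ _ _ _ (Reach_s14.stepD h0 h1 h2)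
        unfold CompType AntiType at *; tauto
    by_cases hc : CompType G a₀ b₀ c₀ d₀ z
    · left; intro a b c d hr; exact (aux a b c d hr).2 hc
    · right; intro a b c d hr
      exact (hty a b c d hr).resolve_left (fun h' => hc ((aux a b c d hr).1 h'))
  have r₀ : R a₀ b₀ c₀ d₀ := Reach_s14.base
  have hM := h.hH (S ∪ Z) (by
      rintro z (⟨a, b, c, d, hr, hz⟩ | hz)
      · have v := (hR a b c d hr).1
        rcases hz with rfl | rfl | rfl | rfl
        · exact v.ma
        · exact v.mb
        · exact v.mc
        · exact v.md
      · exact hz.1)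
    ⟨a₀, Or.inl ⟨_, _, _, _, r₀, Or.inl rfl⟩, b₀, Or.inl ⟨_, _, _, _, r₀, Or.inr (Or.inl rfl)⟩,
      v₀.ab.ne⟩ (by
      intro z hz hzS
      rcases hout z hz hzS with hc | hc
      · left
        rintro s (⟨a, b, c, d, hr, hs⟩ | ⟨hs, a, b, c, d, hr, he⟩)
        · obtain ⟨z1, z2, z3, z4⟩ := hc a b c d hr
          rcases hs with rfl | rfl | rfl | rfl <;> assumption
        · exact h.compEnd (hR a b c d hr).1 (hc a b c d hr) he
      · right
        rintro s (⟨a, b, c, d, hr, hs⟩ | ⟨hs, a, b, c, d, hr, he⟩)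
        · obtain ⟨z1, z2, z3, z4⟩ := hc a b c d hr
          rcases hs with rfl | rfl | rfl | rfl <;> assumption
        · exact h.antiEnd (hR a b c d hr).1 (hc a b c d hr) he)
  rcases hM hw with ⟨a, b, c, d, hr, hs⟩ | ⟨_, a, b, c, d, hr, he⟩
  · obtain ⟨z1, z2, z3, z4⟩ := (hR a b c d hr).2
    rcases hs with rfl | rfl | rfl | rfl
    · exact z1.ne rfl
    · exact z2.ne rfl
    · exact z3.ne rfl
    · exact z4.ne rfl
  · obtain ⟨z1, z2, z3, z4⟩ := (hR a b c d hr).2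
    rcases he with ⟨_, h2, _⟩ | ⟨_, h2, _⟩ <;> exact h2 z2

/-- In a prime bull-free graph, a connected set with an anticomplete vertex has a mixed vertex
having an anticomplete neighbour. -/
theorem exists_mixed {G : SimpleGraph V} (hB : BullFree G) (hPr : IsPrimeGraph G) (M : Set V)
    (hcon : ∀ z, (∃ a ∈ M, G.Adj z a) → (∃ a ∈ M, ¬ G.Adj z a) →
      ∃ a ∈ M, ∃ b ∈ M, G.Adj a b ∧ G.Adj z a ∧ ¬ G.Adj z b)
    (h2 : ∃ a ∈ M, ∃ b ∈ M, a ≠ b) (x : V) (hxM : x ∉ M) (hx : ∀ v ∈ M, ¬ G.Adj x v) :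
    ∃ p y, (∀ v ∈ M, ¬ G.Adj p v) ∧ G.Adj p y ∧ (∃ a ∈ M, G.Adj y a) ∧
      (∃ a ∈ M, ¬ G.Adj y a) := by
  by_contra! hno
  let X : Set V := {v | v ∉ M ∧ ∀ m ∈ M, ¬ G.Adj v m}
  let Y : Set V := {v | (∀ m ∈ M, G.Adj v m) ∧ ∃ p ∈ X, G.Adj p v}
  let Y' : Set V := {v | v ∈ Y ∨ ((∀ m ∈ M, G.Adj v m) ∧ ∃ u ∈ Y, ¬ G.Adj v u)}
  obtain ⟨m₁, hm₁, m₂, hm₂, hm⟩ := h2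
  have hY'C : ∀ v ∈ Y', ∀ m ∈ M, G.Adj v m := by
    rintro v (hv | hv)
    · exact hv.1
    · exact hv.1
  have hMS : ∀ m ∈ M, m ∉ X ∧ m ∉ Y' := by
    intro m hm
    exact ⟨fun h => h.1 hm, fun h => (hY'C m h m hm).ne rfl⟩
  -- elements of `S` have a neighbour in `M`, or are in `M`
  have hnb : ∀ s, s ∉ X → s ∉ M → ∃ m ∈ M, G.Adj s m := by
    intro s hs hsM
    by_contra! hh
    exact hs ⟨hsM, hh⟩
  have hXS : ∀ v ∈ X, ∀ s, s ∉ X → s ∉ Y' → ¬ G.Adj v s := by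
    intro v hv s hs hs' hvs
    by_cases hsM : s ∈ M
    · exact hv.2 s hsM hvs
    obtain ⟨m, hm, hsm⟩ := hnb s hs hsM
    have := hno v s hv.2 hvs ⟨m, hm, hsm⟩
    exact hs' (Or.inl ⟨this, v, hv, hvs⟩)
  have hYS : ∀ v ∈ Y, ∀ s, s ∉ X → s ∉ Y' → G.Adj v s := by
    intro v hv s hs hs'
    by_contra hvs
    by_cases hsM : s ∈ M
    · exact hvs (hv.1 s hsM)
    by_cases hsC : ∀ m ∈ M, G.Adj s m
    · exact hs' (Or.inr ⟨hsC, v, hv, fun h => hvs h.symm⟩)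
    push Not at hsC
    obtain ⟨a, ha, b, hb, hab, hsa, hsb⟩ := hcon s (hnb s hs hsM) hsC
    obtain ⟨hvM, p, hp, hpv⟩ := hv
    exact hB.elim hpv (hvM a ha) hsa.symm (hvM b hb) hab (hp.2 a ha) (hXS p hp s hs hs')
      (hp.2 b hb) hvs hsb
  apply hPr
  refine ⟨{v | v ∉ X ∧ v ∉ Y'}, ?_, ⟨m₁, hMS m₁ hm₁, m₂, hMS m₂ hm₂, hm⟩, ?_⟩
  · intro v hv
    by_cases hvX : v ∈ X
    · right
      rintro s ⟨hs, hs'⟩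
      exact hXS v hvX s hs hs'
    · have hvY' : v ∈ Y' := by
        by_contra hh
        exact hv ⟨hvX, hh⟩
      left
      rintro s ⟨hs, hs'⟩
      by_cases hvY : v ∈ Y
      · exact hYS v hvY s hs hs'
      by_contra hvs
      have hsM : s ∉ M := fun hsM => hvs (hY'C v hvY' s hsM)
      obtain ⟨m, hm, hsm⟩ := hnb s hs hsM
      rcases hvY' with hvY' | ⟨hvC, u, hu, hvu⟩
      · exact hvY hvY'
      have hus := hYS u hu s hs hs'
      obtain ⟨huM, p, hp, hpu⟩ := hu
      exact hB.elim hpu (huM m hm) (hvC m hm).symm hus hsm.symm (hp.2 m hm)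
        (fun hpv => hvY ⟨hvC, p, hp, hpv⟩) (hXS p hp s hs hs') (fun h => hvu h.symm) hvs
  · intro hh
    have : x ∈ {v | v ∉ X ∧ v ∉ Y'} := hh ▸ Set.mem_univ x
    exact this.1 ⟨hxM, hx⟩

end Helpers

section Coloring

theorem Ctx.noClique {G : SimpleGraph V} {M : Set V} {p y : V} (h : Ctx G M p y)
    (A T : Finset V) (hA : ∀ a, a ∈ A ↔ a ∈ M ∧ G.Adj y a) (hA0 : A.Nonempty)
    (hTM : ∀ t ∈ T, t ∈ M) (hT : G.IsClique (T : Set V)) (h3 : 3 ≤ T.card)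
    (hTy : ∀ t ∈ T, ¬ G.Adj y t) (hTA : ∀ t ∈ T, ∃ a ∈ A, G.Adj a t)
    (hmax : ∀ a ∈ A, ∃ t ∈ T, ¬ G.Adj a t) : False := by
  classical
  obtain ⟨a, haA, ha⟩ := Finset.exists_max_image A (fun a => (T.filter (G.Adj a)).card) hA0
  obtain ⟨q', hq', haq'⟩ := hmax a haA
  obtain ⟨d, hdA, hdq'⟩ := hTA q' hq'
  have : ∃ q ∈ T, G.Adj a q ∧ ¬ G.Adj d q := by
    by_contra! hh
    have hlt : (T.filter (G.Adj a)).card < (T.filter (G.Adj d)).card := by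
      apply Finset.card_lt_card
      rw [Finset.ssubset_iff_of_subset]
      · exact ⟨q', by simp [hq', hdq'], by simp [haq']⟩
      · intro t ht
        simp only [Finset.mem_filter] at ht ⊢
        exact ⟨ht.1, hh t ht.1 ht.2⟩
    exact absurd (ha d hdA) (not_le.2 hlt)
  obtain ⟨q, hq, haq, hdq⟩ := this
  have hqq : q ≠ q' := by rintro rfl; exact hdq hdq'
  obtain ⟨haM, hya⟩ := (hA a).1 haA
  obtain ⟨hdM, hyd⟩ := (hA d).1 hdA
  have v : Vld G M y a q q' d := ⟨haM, hTM q hq, hTM q' hq', hdM, hya, hyd, hTy q hq, hTy q' hq',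
    haq, hT hq hq' hqq, hdq'.symm, haq', fun h => hdq h.symm, h.stableA haM hdM hya hyd⟩
  obtain ⟨w, hw⟩ : ((T.erase q).erase q').Nonempty := by
    rw [← Finset.card_pos, Finset.card_erase_of_mem (by simp [hq', hqq.symm]),
      Finset.card_erase_of_mem hq]
    omega
  simp only [Finset.mem_erase] at hw
  obtain ⟨hwq', hwq, hw⟩ := hw
  have wq := hT hw hq hwq
  have wq' := hT hw hq' hwq'
  by_cases wa : G.Adj w a
  · by_cases wd : G.Adj w d
    · exact h.noComp v (hTM w hw) ⟨wa, wq, wq', wd⟩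
    · exact h.noTwin v (hTM w hw) (hTy w hw) wa wq wq' wd
  · by_cases wd : G.Adj w d
    · exact h.noTwin v.rev (hTM w hw) (hTy w hw) wd wq' wq wa
    · exact (h.forb v (hTM w hw)).2.2.1 (hTy w hw) wa wq wq' wd

/-- Colourability of a finite set of vertices. -/
def Col (G : SimpleGraph V) (M : Finset V) (n : ℕ) : Prop :=
  ∃ c : V → ℕ, (∀ v ∈ M, c v < n) ∧ ∀ u ∈ M, ∀ v ∈ M, G.Adj u v → c u ≠ c v

/-- All cliques inside `M` have at most `n` vertices. -/
def CF (G : SimpleGraph V) (M : Finset V) (n : ℕ) : Prop :=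
  ∀ T ⊆ M, G.IsClique (T : Set V) → T.card ≤ n

theorem col_add [DecidableEq V] {G : SimpleGraph V} {M I : Finset V} {n : ℕ}
    (hI : ∀ u ∈ I, ∀ v ∈ I, ¬ G.Adj u v) (h : Col G (M \ I) n) : Col G M (n + 1) := by
  obtain ⟨c, h1, h2⟩ := h
  refine ⟨fun v => if v ∈ I then n else c v, ?_, ?_⟩
  · intro v hv
    by_cases hvI : v ∈ I
    · simp [hvI]
    · have := h1 v (by simp [hv, hvI])
      simp only [hvI, if_false]; omega
  · intro u hu v hv huv
    by_cases hvI : v ∈ I <;> by_cases huI : u ∈ I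
    · exact absurd huv (hI u huI v hvI)
    · have := h1 u (by simp [hu, huI])
      simp only [hvI, huI, if_true, if_false]; omega
    · have := h1 v (by simp [hv, hvI])
      simp only [hvI, huI, if_true, if_false]; omega
    · simp only [hvI, huI, if_false]
      exact h2 u (by simp [hu, huI]) v (by simp [hv, hvI]) huv

/-- A disconnected set is colourable if its proper subsets are. -/
theorem col_disconn [DecidableEq V] {G : SimpleGraph V} {M U : Finset V} {n : ℕ}
    (hn : ∀ u ∈ U, ∀ v ∈ M \ U, ¬ G.Adj u v)
    (h1 : Col G U n) (h2 : Col G (M \ U) n) : Col G M n := by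
  obtain ⟨c, c1, c2⟩ := h1
  obtain ⟨d, d1, d2⟩ := h2
  refine ⟨fun v => if v ∈ U then c v else d v, ?_, ?_⟩
  · intro v hv
    by_cases hvU : v ∈ U
    · simpa [hvU] using c1 v hvU
    · simpa [hvU] using d1 v (by simp [hv, hvU])
  · intro u hu v hv huv
    by_cases hvU : v ∈ U <;> by_cases huU : u ∈ U
    · simpa [hvU, huU] using c2 u huU v hvU huv
    · exact absurd huv.symm (hn v hvU u (by simp [hu, huU]))
    · exact absurd huv (hn u huU v (by simp [hv, hvU]))
    · simpa [hvU, huU] using d2 u (by simp [hu, huU]) v (by simp [hv, hvU]) huv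

/-- Every clique of size `n` uses all the `n` colours. -/
theorem clique_color {G : SimpleGraph V} {T : Finset V} {n : ℕ} {c : V → ℕ}
    (hT : G.IsClique (T : Set V)) (hn : T.card = n) (h1 : ∀ v ∈ T, c v < n)
    (h2 : ∀ u ∈ T, ∀ v ∈ T, G.Adj u v → c u ≠ c v) (k : ℕ) (hk : k < n) : ∃ v ∈ T, c v = k := by
  have hinj : Set.InjOn c T := by
    intro u hu v hv huv
    by_contra hne
    exact h2 u hu v hv (hT hu hv hne) huv
  have him : T.image c = Finset.range n := by
    apply Finset.eq_of_subset_of_card_le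
    · intro k hk
      obtain ⟨v, hv, rfl⟩ := Finset.mem_image.1 hk
      exact Finset.mem_range.2 (h1 v hv)
    · rw [Finset.card_image_of_injOn hinj, Finset.card_range, hn]
  have : k ∈ T.image c := by rw [him]; exact Finset.mem_range.2 hk
  simpa using this

/-- Adjacent twins. -/
theorem col_twin [DecidableEq V] {G : SimpleGraph V} {M : Finset V} {n : ℕ}
    (ih : ∀ M' ⊂ M, ∀ n, CF G M' n → Col G M' n) (hM : CF G M n) {s t : V} (hs : s ∈ M)
    (ht : t ∈ M) (hst : G.Adj s t)
    (htw : ∀ z ∈ M, z ≠ s → z ≠ t → (G.Adj z s ↔ G.Adj z t)) : Col G M n := by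
  have hcf : ∀ M' ⊆ M, CF G M' n := fun M' h T hT => hM T (hT.trans h)
  obtain ⟨c, c1, c2⟩ := ih (M.erase t) (Finset.erase_ssubset ht) n (hcf _ (Finset.erase_subset _ _))
  have hn1 : 1 ≤ n := by
    have := hM {s} (by simpa using hs) (by simp)
    simpa using this
  obtain ⟨m, rfl⟩ : ∃ m, n = m + 1 := ⟨n - 1, by omega⟩
  have hse : s ∈ M.erase t := Finset.mem_erase.2 ⟨hst.ne, hs⟩
  let I : Finset V := insert t ((M.erase t).filter (fun v => c v = c s ∧ v ≠ s))
  have hI : ∀ v, v ∈ I ↔ v = t ∨ (v ≠ t ∧ v ∈ M ∧ c v = c s ∧ v ≠ s) := by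
    intro v; simp [I]; tauto
  have nadj : ∀ v, v ≠ t → v ∈ M → c v = c s → ¬ G.Adj v s := by
    intro v h1 h2 h3 h4
    exact c2 v (Finset.mem_erase.2 ⟨h1, h2⟩) s hse h4 h3
  apply col_add (I := I)
  · intro u hu v hv huv
    rcases (hI u).1 hu with rfl | ⟨u1, u2, u3, u4⟩ <;>
      rcases (hI v).1 hv with rfl | ⟨v1, v2, v3, v4⟩
    · exact huv.ne rfl
    · exact nadj v v1 v2 v3 ((htw v v2 v4 v1).2 huv.symm)
    · exact nadj u u1 u2 u3 ((htw u u2 u4 u1).2 huv)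
    · exact c2 u (Finset.mem_erase.2 ⟨u1, u2⟩) v (Finset.mem_erase.2 ⟨v1, v2⟩) huv (u3.trans v3.symm)
  · apply ih
    · rw [Finset.ssubset_iff_of_subset Finset.sdiff_subset]
      exact ⟨t, ht, by simp [I]⟩
    · intro T hT hTc
      by_contra hlt
      have hTM : T ⊆ M := hT.trans Finset.sdiff_subset
      have hTn : T.card = m + 1 := le_antisymm (hM T hTM hTc) (by omega)
      have hTe : T ⊆ M.erase t := by
        intro v hv
        refine Finset.mem_erase.2 ⟨?_, hTM hv⟩
        rintro rfl
        have := hT hv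
        simp [I] at this
      obtain ⟨v, hv, hvc⟩ := clique_color hTc hTn (fun v hv => c1 v (hTe hv))
        (fun u hu v hv => c2 u (hTe hu) v (hTe hv)) (c s) (c1 s hse)
      have hvs : v = s := by
        by_contra hne
        have h1 := (Finset.mem_sdiff.1 (hT hv)).2
        exact h1 ((hI v).2 (Or.inr ⟨(Finset.mem_erase.1 (hTe hv)).1, hTM hv, hvc, hne⟩))
      subst hvs
      have htT : t ∉ T := fun h => (Finset.mem_erase.1 (hTe h)).1 rfl
      have := hM (insert t T) (Finset.insert_subset ht hTM) (by
        rw [Finset.coe_insert]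
        refine hTc.insert ?_
        intro z hz hzt
        by_cases hzs : z = v
        · subst hzs; exact hst.symm
        · exact ((htw z (hTM hz) hzs hzt.symm).1 (hTc hz hv hzs)).symm)
      rw [Finset.card_insert_of_notMem htT, hTn] at this
      omega

/-- Homogeneous sets. -/
theorem col_homog [DecidableEq V] {G : SimpleGraph V} {M D : Finset V} {n : ℕ}
    (ih : ∀ M' ⊂ M, ∀ n, CF G M' n → Col G M' n) (hM : CF G M n) (hD : D ⊂ M)
    (h2 : ∃ a ∈ D, ∃ b ∈ D, a ≠ b)
    (hh : ∀ v ∈ M, v ∉ D → (∀ d ∈ D, G.Adj v d) ∨ (∀ d ∈ D, ¬ G.Adj v d)) : Col G M n := by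
  classical
  -- a maximum clique of `D`
  obtain ⟨T, hT, hTmax⟩ := Finset.exists_max_image
    (D.powerset.filter (fun T : Finset V => G.IsClique (T : Set V))) Finset.card ⟨∅, by simp⟩
  simp only [Finset.mem_filter, Finset.mem_powerset] at hT hTmax
  obtain ⟨hTD, hTc⟩ := hT
  by_cases hTeq : T = D
  · subst hTeq
    obtain ⟨a, ha, b, hb, hab⟩ := h2
    refine col_twin ih hM (hD.1 ha) (hD.1 hb) (hTc ha hb hab) ?_
    intro z hz hza hzb
    by_cases hzT : z ∈ T
    · exact ⟨fun _ => hTc hzT hb hzb, fun _ => hTc hzT ha hza⟩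
    · rcases hh z hz hzT with h | h
      · exact ⟨fun _ => h b hb, fun _ => h a ha⟩
      · exact ⟨fun h' => absurd h' (h a ha), fun h' => absurd h' (h b hb)⟩
  · obtain ⟨d, d1, d2⟩ := ih D hD T.card (fun S hS hSc => hTmax S ⟨hS, hSc⟩)
    have hsub : (M \ D) ∪ T ⊆ M := Finset.union_subset Finset.sdiff_subset (hTD.trans hD.1)
    obtain ⟨e, heD, heT⟩ : ∃ e ∈ D, e ∉ T := by
      by_contra! hc
      exact hTeq (Finset.Subset.antisymm hTD hc)
    obtain ⟨c, c1, c2⟩ := ih ((M \ D) ∪ T) (by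
      rw [Finset.ssubset_iff_of_subset hsub]
      exact ⟨e, hD.1 heD, by simp [heD, heT]⟩) n (fun S hS => hM S (hS.trans hsub))
    have hcinj : Set.InjOn c T := by
      intro u hu v hv huv
      by_contra hne
      exact c2 u (by simp [Finset.mem_coe.1 hu]) v (by simp [Finset.mem_coe.1 hv])
        (hTc hu hv hne) huv
    let f := T.equivFin
    let g : ℕ → V := fun k => if hk : k < T.card then (f.symm ⟨k, hk⟩ : V) else e
    have hgT : ∀ k < T.card, g k ∈ T := by
      intro k hk; simp [g, hk]
    have hginj : ∀ k < T.card, ∀ l < T.card, g k = g l → k = l := by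
      intro k hk l hl hkl
      simp only [g, hk, hl, dif_pos] at hkl
      have := f.symm.injective (Subtype.ext hkl)
      simpa using this
    refine ⟨fun v => if v ∈ D then c (g (d v)) else c v, ?_, ?_⟩
    · intro v hv
      by_cases hvD : v ∈ D
      · simp only [hvD, if_true]
        exact c1 _ (Finset.mem_union_right _ (hgT _ (d1 v hvD)))
      · simp only [hvD, if_false]
        exact c1 v (by simp [hv, hvD])
    · have mixed : ∀ u ∈ D, ∀ v ∈ M, v ∉ D → G.Adj v u → c v ≠ c (g (d u)) := by
        intro u hu v hv hvD hvu
        have hall : ∀ d ∈ D, G.Adj v d := by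
          rcases hh v hv hvD with h | h
          · exact h
          · exact absurd hvu (h u hu)
        have hg := hgT _ (d1 u hu)
        exact c2 v (by simp [hv, hvD]) _ (Finset.mem_union_right _ hg) (hall _ (hTD hg))
      intro u hu v hv huv
      by_cases huD : u ∈ D <;> by_cases hvD : v ∈ D <;> simp only [huD, hvD, if_true, if_false]
      · intro heq
        have := hcinj (hgT _ (d1 u huD)) (hgT _ (d1 v hvD)) heq
        exact d2 u huD v hvD huv (hginj _ (d1 u huD) _ (d1 v hvD) this)
      · exact (mixed u huD v hv hvD huv.symm).symm
      · exact mixed v hvD u hu huD huv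
      · exact c2 u (by simp [hu, huD]) v (by simp [hv, hvD]) huv

theorem exists_parent {W : Type*} {H : SimpleGraph W} (hc : H.Connected) (r u : W) (k : ℕ)
    (hu : H.dist r u = k + 1) : ∃ v, H.Adj u v ∧ H.dist r v = k := by
  obtain ⟨q, hq⟩ := hc.exists_walk_length_eq_dist u r
  rw [SimpleGraph.dist_comm, hu] at hq
  cases q with
  | nil => simp at hq
  | cons hadj q' =>
    rename_i v
    refine ⟨v, hadj, ?_⟩
    have h1 : H.dist v r ≤ k := by
      have := SimpleGraph.dist_le q'
      simp at hq
      omega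
    have h2 := hc.dist_triangle (u := r) (v := v) (w := u)
    rw [SimpleGraph.dist_eq_one_iff_adj.2 hadj.symm] at h2
    rw [SimpleGraph.dist_comm] at h1
    omega

/-- Connected graphs with no triangle, no induced C5 and no induced P6 have no edge inside a
distance level. -/
theorem no_level_edge {W : Type*} {H : SimpleGraph W} (hc : H.Connected) (hP : P6Free H)
    (h3 : ∀ a b c, H.Adj a b → H.Adj b c → H.Adj a c → False)
    (h5 : ∀ a b c d e, ¬ IsInducedC5 H ![a, b, c, d, e]) (r : W) (k : ℕ) :
    ∀ u v, H.dist r u = k → H.dist r v = k → ¬ H.Adj u v := by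
  have far : ∀ a b, H.Adj a b → H.dist r b ≤ H.dist r a + 1 := by
    intro a b hab
    have := hc.dist_triangle (u := r) (v := a) (w := b)
    rwa [SimpleGraph.dist_eq_one_iff_adj.2 hab] at this
  induction k using Nat.strong_induction_on with
  | _ k ih =>
    intro u v hu hv huv
    match k, ih, hu, hv with
    | 0, ih, hu, hv =>
      have h1 := (hc.dist_eq_zero_iff).1 hu
      have h2 := (hc.dist_eq_zero_iff).1 hv
      exact huv.ne (h1.symm.trans h2)
    | 1, ih, hu, hv =>
      exact h3 r u v (SimpleGraph.dist_eq_one_iff_adj.1 hu) huv (SimpleGraph.dist_eq_one_iff_adj.1 hv)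
    | k + 2, ih, hu, hv =>
      obtain ⟨u', huu, hu'⟩ := exists_parent hc r u (k + 1) hu
      obtain ⟨v', hvv, hv'⟩ := exists_parent hc r v (k + 1) hv
      obtain ⟨u'', huu', hu''⟩ := exists_parent hc r u' k hu'
      obtain ⟨v'', hvv', hv''⟩ := exists_parent hc r v' k hv'
      have e1 : ¬ H.Adj u' v' := ih (k + 1) (by omega) u' v' hu' hv'
      have e2 : ¬ H.Adj u'' v'' := ih k (by omega) u'' v'' hu'' hv''
      have e3 : ¬ H.Adj u' v := fun h => h3 u v u' huv h.symm huu
      have e4 : ¬ H.Adj u v' := fun h => h3 u v v' huv hvv h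
      have g1 : ¬ H.Adj u'' u := fun h => by have := far _ _ h; omega
      have g2 : ¬ H.Adj u'' v := fun h => by have := far _ _ h; omega
      have g3 : ¬ H.Adj v'' u := fun h => by have := far _ _ h; omega
      have g4 : ¬ H.Adj v'' v := fun h => by have := far _ _ h; omega
      by_cases f1 : H.Adj u'' v'
      · exact h5 u'' u' u v v' (inducedC5_of huu'.symm huu.symm huv hvv f1.symm g1 g2 e3 e1 e4)
      by_cases f2 : H.Adj v'' u'
      · exact h5 v'' u' u v v' (inducedC5_of f2 huu.symm huv hvv hvv' g3 g4 e3 e1 e4)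
      exact hP.elim huu'.symm huu.symm huv hvv hvv' g1 g2 f1 e2 e3 e1 (fun h => f2 h.symm) e4
        (fun h => g3 h.symm) (fun h => g4 h.symm)

theorem P6Free.induce {G : SimpleGraph V} (hP : P6Free G) (M : Set V) :
    P6Free (G.induce M) := by
  rintro ⟨q, hq, hq'⟩
  exact hP ⟨fun i => (q i : V), fun i j h => hq (Subtype.ext h), fun i j => hq' i j⟩

/-- The main finite statement. -/
theorem main_finite {G : SimpleGraph V} (hP : P6Free G) (hB : BullFree G) (hPr : IsPrimeGraph G)
    (x : V) (K : Set V) (hxK : x ∉ K) (hx : ∀ v ∈ K, ¬ G.Adj x v)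
    (hC : ∀ a ∈ K, ∀ b ∈ K, ∀ c ∈ K, ∀ d ∈ K, ∀ e ∈ K, ¬ IsInducedC5 G ![a, b, c, d, e])
    (M : Finset V) : (M : Set V) ⊆ K → ∀ n, CF G M n → Col G M n := by
  classical
  induction M using Finset.strongInduction with
  | H M ih0 =>
  intro hMK n hM
  have ih : ∀ M' ⊂ M, ∀ n, CF G M' n → Col G M' n := fun M' h n hn =>
    ih0 M' h ((Finset.coe_subset.2 h.1).trans hMK) n hn
  by_contra hcol
  have hcf : ∀ M' ⊆ M, CF G M' n := fun M' h T hT => hM T (hT.trans h)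
  have hconn : ∀ U ⊆ M, U.Nonempty → U ≠ M → ∃ u ∈ U, ∃ v ∈ M, v ∉ U ∧ G.Adj u v := by
    intro U hU hU0 hUM
    by_contra! hno
    apply hcol
    refine col_disconn (U := U) ?_ (ih U (hU.ssubset_of_ne hUM) n (hcf U hU))
      (ih (M \ U) ?_ n (hcf _ Finset.sdiff_subset))
    · intro u hu v hv
      rw [Finset.mem_sdiff] at hv
      exact hno u hu v hv.1 hv.2
    · exact Finset.sdiff_ssubset hU hU0
  have hM0 : M.Nonempty := by
    by_contra h0
    rw [Finset.not_nonempty_iff_eq_empty] at h0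
    subst h0
    exact hcol ⟨fun _ => 0, by simp, by simp⟩
  obtain ⟨m₀, hm₀⟩ := hM0
  have hne : ({m₀} : Finset V) ≠ M := by
    intro h0
    have h1 : 1 ≤ n := by
      have := hM {m₀} (by simpa using hm₀) (by simp)
      simpa using this
    apply hcol
    refine ⟨fun _ => 0, fun _ _ => h1, ?_⟩
    rw [← h0]
    intro u hu v hv huv
    rw [Finset.mem_singleton] at hu hv
    exact absurd (hu.trans hv.symm) huv.ne
  obtain ⟨m₁, hm₁, m₂, hm₂, hm₂', hmm⟩ := hconn {m₀} (by simpa using hm₀) (by simp) hne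
  have hm₁M : m₁ ∈ M := by
    rw [Finset.mem_singleton] at hm₁
    exact hm₁ ▸ hm₀
  have hn2 : 2 ≤ n := by
    have := hM {m₁, m₂} (by intro v hv; simp at hv; rcases hv with rfl | rfl <;> assumption) (by
      simp [SimpleGraph.isClique_insert, hmm])
    rwa [Finset.card_pair hmm.ne] at this
  have hn3 : 3 ≤ n := by
    by_contra hn3
    obtain rfl : n = 2 := by omega
    have hconnected : (G.induce (M : Set V)).Connected := by
      have hpre : ∀ u, (G.induce (M : Set V)).Reachable ⟨m₀, hm₀⟩ u := by
        by_contra! hh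
        obtain ⟨⟨u, hu⟩, hnr⟩ := hh
        let U : Finset V := M.filter (fun v => ∃ hv : v ∈ M,
          (G.induce (M : Set V)).Reachable ⟨m₀, hm₀⟩ ⟨v, hv⟩)
        obtain ⟨a, ha, b, hb, hbU, hab⟩ := hconn U (Finset.filter_subset _ _)
          ⟨m₀, Finset.mem_filter.2 ⟨hm₀, hm₀, SimpleGraph.Reachable.refl _⟩⟩ (by
            intro hUM
            have : u ∈ U := by rw [hUM]; exact hu
            exact hnr (Finset.mem_filter.1 this).2.2)
        obtain ⟨haM, haM', har⟩ := Finset.mem_filter.1 ha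
        apply hbU
        refine Finset.mem_filter.2 ⟨hb, hb, har.trans ?_⟩
        apply SimpleGraph.Adj.reachable
        exact hab
      haveI : Nonempty (M : Set V) := ⟨⟨m₀, hm₀⟩⟩
      exact ⟨fun u v => (hpre u).symm.trans (hpre v)⟩
    have hlev := no_level_edge hconnected (hP.induce _)
      (by
        rintro ⟨a, ha⟩ ⟨b, hb⟩ ⟨c, hc⟩ hab hbc hac
        have hab' : G.Adj a b := hab
        have hbc' : G.Adj b c := hbc
        have hac' : G.Adj a c := hac
        have := hM {a, b, c} (by
          intro v hv; simp at hv; rcases hv with rfl | rfl | rfl <;> assumption)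
          (by simp [SimpleGraph.isClique_insert, hab', hbc', hac'])
        rw [Finset.card_eq_three.2 ⟨a, b, c, hab'.ne, hac'.ne, hbc'.ne, rfl⟩] at this
        omega)
      (by
        rintro ⟨a, ha⟩ ⟨b, hb⟩ ⟨c, hc⟩ ⟨d, hd⟩ ⟨e, he⟩ ⟨h1, h2⟩
        refine hC a (hMK ha) b (hMK hb) c (hMK hc) d (hMK hd) e (hMK he) ?_
        have hval : ∀ i, ![a, b, c, d, e] i =
            ((![⟨a, ha⟩, ⟨b, hb⟩, ⟨c, hc⟩, ⟨d, hd⟩, ⟨e, he⟩] : Fin 5 → (M : Set V)) i : V) := by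
          intro i; fin_cases i <;> rfl
        refine ⟨?_, ?_⟩
        · intro i j hij
          rw [hval, hval] at hij
          exact h1 (Subtype.ext hij)
        · intro i j
          rw [hval, hval]
          exact h2 i j)
      ⟨m₀, hm₀⟩
    apply hcol
    let δ : V → ℕ := fun v => if hv : v ∈ M then
      (G.induce (M : Set V)).dist ⟨m₀, hm₀⟩ ⟨v, hv⟩ else 0
    refine ⟨fun v => δ v % 2, fun v _ => Nat.mod_lt _ (by omega), ?_⟩
    intro u hu v hv huv
    have hadj : (G.induce (M : Set V)).Adj ⟨u, hu⟩ ⟨v, hv⟩ := huv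
    have h1 : δ u = (G.induce (M : Set V)).dist ⟨m₀, hm₀⟩ ⟨u, hu⟩ := by simp [δ, hu]
    have h2 : δ v = (G.induce (M : Set V)).dist ⟨m₀, hm₀⟩ ⟨v, hv⟩ := by simp [δ, hv]
    have h3 : δ u ≠ δ v := by
      intro h
      rw [h1, h2] at h
      exact hlev _ _ _ rfl h.symm hadj
    have t1 := hconnected.dist_triangle (u := ⟨m₀, hm₀⟩) (v := ⟨u, hu⟩) (w := ⟨v, hv⟩)
    have t2 := hconnected.dist_triangle (u := ⟨m₀, hm₀⟩) (v := ⟨v, hv⟩) (w := ⟨u, hu⟩)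
    rw [SimpleGraph.dist_eq_one_iff_adj.2 hadj] at t1
    rw [SimpleGraph.dist_eq_one_iff_adj.2 hadj.symm] at t2
    rw [← h1, ← h2] at t1 t2
    show δ u % 2 ≠ δ v % 2
    omega
  obtain ⟨p, y, hp, hpy, hy1, hy0⟩ := exists_mixed hB hPr (M : Set V) (by
      rintro z ⟨a, ha, hza⟩ ⟨b, hb, hzb⟩
      obtain ⟨u, hu, v, hv, hvU, huv⟩ := hconn (M.filter (G.Adj z)) (Finset.filter_subset _ _)
        ⟨a, Finset.mem_filter.2 ⟨ha, hza⟩⟩ (by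
          intro h
          have : b ∈ M.filter (G.Adj z) := by rw [h]; exact hb
          exact hzb (Finset.mem_filter.1 this).2)
      rw [Finset.mem_filter] at hu hvU
      exact ⟨u, hu.1, v, hv, huv, hu.2, fun h => hvU ⟨hv, h⟩⟩)
    ⟨m₁, hm₁M, m₂, hm₂, hmm.ne⟩ x (fun h => hxK (hMK h)) (fun v hv => hx v (hMK hv))
  have ctx : Ctx G (M : Set V) p y := by
    refine ⟨hP, hB, ?_, hp, hpy, hy0, ?_⟩
    · intro a ha b hb c hc d hd e he
      exact hC a (hMK ha) b (hMK hb) c (hMK hc) d (hMK hd) e (hMK he)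
    · intro D hDM h2 hh
      by_contra hnot
      apply hcol
      have hfin : ∀ v, v ∈ M.filter (· ∈ D) ↔ v ∈ D := by
        intro v
        rw [Finset.mem_filter]
        exact ⟨fun h => h.2, fun h => ⟨hDM h, h⟩⟩
      refine col_homog (D := M.filter (· ∈ D)) ih hM ?_ ?_ ?_
      · rw [Finset.ssubset_iff_of_subset (Finset.filter_subset _ _)]
        obtain ⟨v, hv, hvD⟩ := Set.not_subset.1 hnot
        exact ⟨v, hv, fun h => hvD ((hfin v).1 h)⟩
      · obtain ⟨a, ha, b, hb, hab⟩ := h2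
        exact ⟨a, (hfin a).2 ha, b, (hfin b).2 hb, hab⟩
      · intro v hv hvD
        simp only [hfin] at hvD ⊢
        exact hh v hv hvD
  obtain ⟨a₀, ha₀, hya₀⟩ := hy1
  let A : Finset V := M.filter (G.Adj y)
  have hA : ∀ a, a ∈ A ↔ a ∈ (M : Set V) ∧ G.Adj y a := fun a => Finset.mem_filter
  let I : Finset V := M.filter (fun v => G.Adj y v ∨ ∀ a ∈ M, G.Adj y a → ¬ G.Adj a v)
  have hI : ∀ v, v ∈ I ↔ v ∈ M ∧ (G.Adj y v ∨ ∀ a ∈ M, G.Adj y a → ¬ G.Adj a v) :=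
    fun v => Finset.mem_filter
  obtain ⟨m, rfl⟩ : ∃ m, n = m + 1 := ⟨n - 1, by omega⟩
  apply hcol
  apply col_add (I := I)
  · intro u hu v hv huv
    obtain ⟨hu, hu'⟩ := (hI u).1 hu
    obtain ⟨hv, hv'⟩ := (hI v).1 hv
    by_cases yu : G.Adj y u <;> by_cases yv : G.Adj y v
    · exact ctx.stableA hu hv yu yv huv
    · exact (hv'.resolve_left yv) u hu yu huv
    · exact (hu'.resolve_left yu) v hv yv huv.symm
    · exact ctx.stableB ⟨a₀, ha₀, hya₀⟩ hu hv yu yv (hu'.resolve_left yu) (hv'.resolve_left yv) huv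
  · apply ih
    · rw [Finset.ssubset_iff_of_subset Finset.sdiff_subset]
      exact ⟨a₀, ha₀, fun h => (Finset.mem_sdiff.1 h).2 ((hI a₀).2 ⟨ha₀, Or.inl hya₀⟩)⟩
    · intro T hT hTc
      by_contra hlt
      have hTM : T ⊆ M := hT.trans Finset.sdiff_subset
      have hTI : ∀ t ∈ T, ¬ G.Adj y t ∧ ∃ a ∈ M, G.Adj y a ∧ G.Adj a t := by
        intro t ht
        have h1 := (Finset.mem_sdiff.1 (hT ht)).2
        rw [hI] at h1
        push Not at h1
        exact h1 (hTM ht)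
      refine ctx.noClique A T hA ⟨a₀, (hA a₀).2 ⟨ha₀, hya₀⟩⟩ hTM hTc (by omega)
        (fun t ht => (hTI t ht).1) ?_ ?_
      · intro t ht
        obtain ⟨a, ha, hya, hat⟩ := (hTI t ht).2
        exact ⟨a, (hA a).2 ⟨ha, hya⟩, hat⟩
      · intro a ha
        by_contra! hall
        obtain ⟨haM, hya⟩ := (hA a).1 ha
        have haT : a ∉ T := fun h => (hTI a h).1 hya
        have := hM (insert a T) (Finset.insert_subset haM hTM) (by
          rw [Finset.coe_insert]
          exact hTc.insert (fun z hz _ => hall z hz))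
        rw [Finset.card_insert_of_notMem haT] at this
        omega

/-- From finite sets to all induced subgraphs (de Bruijn–Erdős). -/
theorem perfect_of_finite {W : Type*} {G : SimpleGraph V} {H : SimpleGraph W} (φ : H ↪g G)
    (hfin : ∀ M : Finset V, (M : Set V) ⊆ Set.range φ → ∀ n, CF G M n → Col G M n) :
    H.chromaticNumber = cliqueNumE H := by
  classical
  apply le_antisymm
  · by_cases htop : cliqueNumE H = ⊤
    · rw [htop]; exact le_top
    obtain ⟨n, hn⟩ := ENat.ne_top_iff_exists.1 htop
    rw [← hn, SimpleGraph.chromaticNumber_le_iff_colorable]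
    have hcl : ∀ t : Finset W, H.IsClique (t : Set W) → t.card ≤ n := by
      intro t ht
      have : ((t.card : ℕ) : ℕ∞) ≤ cliqueNumE H :=
        le_sSup ⟨t.card, rfl, t, ⟨ht, rfl⟩⟩
      rw [← hn] at this
      exact_mod_cast this
    apply SimpleGraph.nonempty_hom_of_forall_finite_subgraph_hom
    intro H' hH'
    let M : Finset V := hH'.toFinset.map φ.toEmbedding
    have hMmem : ∀ v ∈ H'.verts, φ v ∈ M := by
      intro v hv
      exact Finset.mem_map.2 ⟨v, hH'.mem_toFinset.2 hv, rfl⟩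
    have hCF : CF G M n := by
      intro T hT hTc
      obtain ⟨t, ht, rfl⟩ := Finset.subset_map_iff.1 hT
      rw [Finset.card_map]
      apply hcl
      intro a ha b hb hab
      have := hTc (Finset.mem_coe.2 (Finset.mem_map_of_mem φ.toEmbedding ha))
        (Finset.mem_coe.2 (Finset.mem_map_of_mem φ.toEmbedding hb)) (φ.injective.ne hab)
      exact φ.map_adj_iff.1 this
    have hcol := hfin M (by
      intro v hv
      obtain ⟨w, _, rfl⟩ := Finset.mem_map.1 (Finset.mem_coe.1 hv)
      exact ⟨w, rfl⟩) n hCF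
    have c := hcol.choose
    have hc := hcol.choose_spec
    refine ⟨fun v => ⟨hcol.choose (φ v), hc.1 _ (hMmem v v.2)⟩, ?_⟩
    intro a b hab
    have hab' : H.Adj a b := H'.adj_sub hab
    have := hc.2 _ (hMmem a a.2) _ (hMmem b b.2) (φ.map_adj_iff.2 hab')
    simpa [Fin.ext_iff] using this
  · apply sSup_le
    rintro _ ⟨m, rfl, t, ht⟩
    rw [← ht.card_eq]
    exact ht.isClique.card_le_chromaticNumber

end Coloring

theorem stmt14 (G : SimpleGraph V)
    (hP : P6Free G) (hB : BullFree G) (hPr : IsPrimeGraph G)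
    (x : V) (N : Set V) (hN : N = {v : V | v ≠ x ∧ ¬ G.Adj x v}) :
    ∀ K : (G.induce N).ConnectedComponent,
      IsPerfect ((G.induce N).induce K.supp) ∨
      ∃ c : Fin 5 → ↥N, (∀ i, c i ∈ K.supp) ∧ IsInducedC5 (G.induce N) c := by
  intro K
  by_cases hnc : ∃ c : Fin 5 → ↥N, (∀ i, c i ∈ K.supp) ∧ IsInducedC5 (G.induce N) c
  · exact Or.inr hnc
  left
  intro S
  let K' : Set V := {v | ∃ hv : v ∈ N, (⟨v, hv⟩ : N) ∈ K.supp}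
  have hKN : ∀ v ∈ K', v ≠ x ∧ ¬ G.Adj x v := by
    rintro v ⟨hv, _⟩
    rw [hN] at hv
    exact hv
  let φ : (((G.induce N).induce K.supp).induce S) ↪g G :=
    ⟨⟨fun w => ((w : K.supp) : N), fun a b h => Subtype.ext (Subtype.ext (Subtype.ext h))⟩, Iff.rfl⟩
  refine perfect_of_finite φ ?_
  intro M hM
  refine main_finite hP hB hPr x K' (fun h => (hKN x h).1 rfl) (fun v hv => (hKN v hv).2) ?_ M ?_
  · rintro a ⟨ha, ha'⟩ b ⟨hb, hb'⟩ c ⟨hc, hc'⟩ d ⟨hd, hd'⟩ e ⟨he, he'⟩ ⟨h1, h2⟩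
    have hval : ∀ i, ![a, b, c, d, e] i =
        ((![⟨a, ha⟩, ⟨b, hb⟩, ⟨c, hc⟩, ⟨d, hd⟩, ⟨e, he⟩] : Fin 5 → N) i : V) := by
      intro i; fin_cases i <;> rfl
    refine hnc ⟨![⟨a, ha⟩, ⟨b, hb⟩, ⟨c, hc⟩, ⟨d, hd⟩, ⟨e, he⟩], ?_, ?_, ?_⟩
    · intro i; fin_cases i <;> assumption
    · intro i j hij
      apply h1
      rw [hval, hval, hij]
    · intro i j
      rw [← h2 i j, hval, hval]
      rfl
  · intro v hv
    obtain ⟨w, rfl⟩ := hM hv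
    exact ⟨w.1.1.2, w.1.2⟩
end
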